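/- arXiv:2403.07628 — 3 statements merged into one kernel-verified Lean document; each statement's English description precedes it below -/
import Mathlib

section
/- Fix an integer n ≥ 1 and real numbers β > 0, γ > 0, c_μ, c_σ. Let μ, σ : ℝ → ℝ be functions such that μ(α) − α/γ → c_μ and σ(α) − √(2α/γ) → c_σ as α → +∞. Then the rescaled Laguerre β-ensemble eigenvalue densities, x ↦ σ(α)^n · p_{L,α}(μ(α) + σ(α)x_1, …, μ(α) + σ(α)x_n), converge locally uniformly on ℝⁿ, as α → +∞, to the Gaussian β-ensemble eigenvalue density p_G(x_1, …, x_n). -/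
open Filter MeasureTheory

/-- The Vandermonde determinant `Δ(x) = ∏_{j>k} (x_j − x_k)`. -/
noncomputable def vdm (n : ℕ) (x : Fin n → ℝ) : ℝ :=
  ∏ p ∈ Finset.univ.filter (fun p : Fin n × Fin n => p.2 < p.1), (x p.1 - x p.2)

/-- The normalization constant of the Gaussian β-ensemble. -/
noncomputable def ZG (n : ℕ) (β γ : ℝ) : ℝ :=
  (2 * Real.pi) ^ ((n : ℝ) / 2) * ((n.factorial : ℝ) / Real.Gamma (β / 2) ^ n) *
    ∏ k ∈ Finset.range n,
      Real.Gamma (((k : ℝ) + 1) * β / 2) / (2 * γ) ^ ((1 + (k : ℝ) * β) / 2)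

/-- The Gaussian β-ensemble joint eigenvalue density. -/
noncomputable def pG (n : ℕ) (β γ : ℝ) (x : Fin n → ℝ) : ℝ :=
  (ZG n β γ)⁻¹ * |vdm n x| ^ β * ∏ k, Real.exp (-γ * (x k) ^ 2)

/-- The normalization constant of the Laguerre β-ensemble with parameter `α`. -/
noncomputable def ZL (n : ℕ) (β γ α : ℝ) : ℝ :=
  ((n.factorial : ℝ) / Real.Gamma (β / 2) ^ n) *
    ∏ k ∈ Finset.range n,
      Real.Gamma (α + 1 + (k : ℝ) * β / 2) * Real.Gamma (((k : ℝ) + 1) * β / 2) /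
        γ ^ (α + 1 + (k : ℝ) * β)

/-- The Laguerre β-ensemble joint eigenvalue density. -/
noncomputable def pL (n : ℕ) (β γ α : ℝ) (x : Fin n → ℝ) : ℝ :=
  (ZL n β γ α)⁻¹ * |vdm n x| ^ β *
    ∏ k, (if 0 < x k then (x k) ^ α * Real.exp (-γ * x k) else 0)

lemma aux_log_bd (a s : ℝ) (ha : 0 < a) (hs : 0 ≤ s) :
    0 ≤ Real.log (a + s) - Real.log a ∧ Real.log (a + s) - Real.log a ≤ s / a ∧
    0 ≤ (a + s) * (Real.log (a + s) - Real.log a) - s ∧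
    (a + s) * (Real.log (a + s) - Real.log a) - s ≤ s ^ 2 / a := by
  have hx : 0 < a + s := by linarith
  have e : Real.log (a + s) - Real.log a = Real.log ((a + s) / a) := by
    rw [Real.log_div hx.ne' ha.ne']
  have h1 : Real.log ((a + s) / a) ≤ s / a := by
    have := Real.log_le_sub_one_of_pos (div_pos hx ha)
    have h2 : (a + s) / a - 1 = s / a := by field_simp; ring
    linarith
  have h2 : s / (a + s) ≤ Real.log ((a + s) / a) := by
    have := Real.one_sub_inv_le_log_of_pos (div_pos hx ha)
    have h2 : 1 - ((a + s) / a)⁻¹ = s / (a + s) := by field_simp; ring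
    linarith
  rw [e]
  refine ⟨le_trans (by positivity) h2, h1, ?_, ?_⟩
  · have := mul_le_mul_of_nonneg_left h2 hx.le
    have h3 : (a + s) * (s / (a + s)) = s := by field_simp
    linarith
  · have := mul_le_mul_of_nonneg_left h1 hx.le
    have h3 : (a + s) * (s / a) = s + s ^ 2 / a := by field_simp
    linarith

/-- Stirling remainder. -/
noncomputable def stR (x : ℝ) : ℝ :=
  Real.log (Real.Gamma (x + 1)) - (x * Real.log x - x + Real.log x / 2)

lemma stR_nat : Tendsto (fun n : ℕ => stR n) atTop (nhds (Real.log (2 * Real.pi) / 2)) := by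
  have h := Stirling.tendsto_stirlingSeq_sqrt_pi
  have h2 := (h.log (by positivity)).add_const (Real.log 2 / 2)
  have e : Real.log √Real.pi + Real.log 2 / 2 = Real.log (2 * Real.pi) / 2 := by
    rw [Real.log_sqrt (by positivity), Real.log_mul (by norm_num) (by positivity)]; ring
  rw [e] at h2
  refine h2.congr' ?_
  filter_upwards [eventually_gt_atTop 0] with n hn
  have hn' : (0 : ℝ) < n := by exact_mod_cast hn
  rw [Stirling.log_stirlingSeq_formula, stR, Real.Gamma_nat_eq_factorial,
    Real.log_mul (by norm_num) hn'.ne', Real.log_div hn'.ne' (Real.exp_pos 1).ne', Real.log_exp]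
  ring

lemma logGamma_feq {y : ℝ} (hy : 0 < y) :
    (Real.log ∘ Real.Gamma) (y + 1) = (Real.log ∘ Real.Gamma) y + Real.log y := by
  simp only [Function.comp_apply]
  rw [Real.Gamma_add_one hy.ne', Real.log_mul hy.ne' (Real.Gamma_pos_of_pos hy).ne', add_comm]

lemma stR_tendsto : Tendsto stR atTop (nhds (Real.log (2 * Real.pi) / 2)) := by
  have h1 : Tendsto (fun x : ℝ => stR (⌊x⌋₊ : ℝ)) atTop (nhds (Real.log (2 * Real.pi) / 2)) :=
    stR_nat.comp tendsto_nat_floor_atTop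
  have h2 : Tendsto (fun x : ℝ => 3 * ((⌊x⌋₊ : ℝ))⁻¹) atTop (nhds 0) := by
    have : Tendsto (fun x : ℝ => ((⌊x⌋₊ : ℝ))⁻¹) atTop (nhds 0) :=
      tendsto_inv_atTop_zero.comp (tendsto_natCast_atTop_atTop.comp tendsto_nat_floor_atTop)
    simpa using this.const_mul 3
  have h3 : Tendsto (fun x : ℝ => stR x - stR (⌊x⌋₊ : ℝ)) atTop (nhds 0) := by
    refine squeeze_zero_norm' ?_ h2
    filter_upwards [eventually_ge_atTop 1] with x hx
    obtain ⟨n, hn⟩ : ∃ n, ⌊x⌋₊ = n := ⟨_, rfl⟩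
    have hn1 : 1 ≤ n := by rw [← hn]; exact Nat.one_le_floor_iff x |>.2 hx
    have hnx : (n : ℝ) ≤ x := by rw [← hn]; exact Nat.floor_le (by linarith)
    have hxn : x < n + 1 := by rw [← hn]; exact Nat.lt_floor_add_one x
    rw [hn]
    obtain ⟨s, hs⟩ : ∃ s, s = x - n := ⟨_, rfl⟩
    have hxs : x = n + s := by linarith
    have hs0 : 0 ≤ s := by linarith
    have hs1 : s ≤ 1 := by linarith
    have hn' : (0 : ℝ) < n := by exact_mod_cast hn1
    have hub : Real.log (Real.Gamma (n + 1 + s)) ≤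
        Real.log (Real.Gamma (n + 1)) + s * Real.log (n + 1) := by
      rcases hs0.eq_or_lt with h | h
      · simp [← h]
      · have := Real.BohrMollerup.f_add_nat_le Real.convexOn_log_Gamma logGamma_feq
          (n := n + 1) (by omega) h hs1
        simpa using this
    have hlb : Real.log (Real.Gamma (n + 1)) + s * Real.log n ≤
        Real.log (Real.Gamma (n + 1 + s)) := by
      rcases hs0.eq_or_lt with h | h
      · simp [← h]
      · have := Real.BohrMollerup.f_add_nat_ge Real.convexOn_log_Gamma logGamma_feq
          (n := n + 1) (by omega) h
        simpa using this
    obtain ⟨a1, a2, a3, a4⟩ := aux_log_bd n s hn' hs0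
    obtain ⟨b1, b2, b3, b4⟩ := aux_log_bd n 1 hn' zero_le_one
    have i1 : s / n ≤ (n : ℝ)⁻¹ := by
      rw [div_eq_mul_inv]; exact mul_le_of_le_one_left (by positivity) hs1
    have i2 : s ^ 2 / n ≤ (n : ℝ)⁻¹ := by
      rw [div_eq_mul_inv]; exact mul_le_of_le_one_left (by positivity) (by nlinarith)
    have i3 : s * (Real.log (n + 1) - Real.log n) ≤ (n : ℝ)⁻¹ := by
      rw [one_div] at b2
      exact (mul_le_of_le_one_left b1 hs1).trans b2
    have hi : (0 : ℝ) < (n : ℝ)⁻¹ := by positivity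
    rw [Real.norm_eq_abs, abs_le]
    unfold stR
    rw [hxs, show (n : ℝ) + s + 1 = n + 1 + s by ring]
    constructor <;> nlinarith
  simpa using h3.add h1

lemma logGamma_shift (c : ℝ) (hc : 0 ≤ c) :
    Tendsto (fun x : ℝ => Real.log (Real.Gamma (x + 1 + c)) -
      (x * Real.log x - x + (c + 1 / 2) * Real.log x)) atTop
      (nhds (Real.log (2 * Real.pi) / 2)) := by
  have h1 : Tendsto (fun x : ℝ => stR (x + c)) atTop (nhds (Real.log (2 * Real.pi) / 2)) :=
    stR_tendsto.comp (tendsto_atTop_add_const_right _ _ tendsto_id)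
  have hz : ∀ d : ℝ, Tendsto (fun x : ℝ => d / x) atTop (nhds 0) := fun d =>
    tendsto_const_nhds.div_atTop tendsto_id
  have h2 : Tendsto (fun x : ℝ => (x + c) * (Real.log (x + c) - Real.log x) - c) atTop
      (nhds 0) := by
    refine tendsto_of_tendsto_of_tendsto_of_le_of_le' tendsto_const_nhds (hz (c ^ 2)) ?_ ?_
    · filter_upwards [eventually_gt_atTop 0] with x hx using (aux_log_bd x c hx hc).2.2.1
    · filter_upwards [eventually_gt_atTop 0] with x hx using (aux_log_bd x c hx hc).2.2.2
  have h3 : Tendsto (fun x : ℝ => Real.log (x + c) - Real.log x) atTop (nhds 0) := by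
    refine tendsto_of_tendsto_of_tendsto_of_le_of_le' tendsto_const_nhds (hz c) ?_ ?_
    · filter_upwards [eventually_gt_atTop 0] with x hx using (aux_log_bd x c hx hc).1
    · filter_upwards [eventually_gt_atTop 0] with x hx using (aux_log_bd x c hx hc).2.1
  have h4 := (h1.add h2).add (h3.mul_const (1 / 2))
  simp only [add_zero, zero_mul] at h4
  refine h4.congr fun x => ?_
  unfold stR
  rw [show x + c + 1 = x + 1 + c by ring]
  ring

lemma sigma_sqrt (γ cσ : ℝ) (hγ : 0 < γ) (σ : ℝ → ℝ)
    (hσ : Tendsto (fun α => σ α - Real.sqrt (2 * α / γ)) atTop (nhds cσ)) :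
    Tendsto (fun α => σ α / √α) atTop (nhds √(2 / γ)) := by
  have h := (hσ.div_atTop Real.tendsto_sqrt_atTop).add_const √(2 / γ)
  rw [zero_add] at h
  refine h.congr' ?_
  filter_upwards [eventually_gt_atTop 0] with α hα
  have : √(2 * α / γ) = √(2 / γ) * √α := by
    rw [← Real.sqrt_mul (by positivity)]; congr 1; ring
  rw [this]
  have : 0 < √α := Real.sqrt_pos.2 hα
  field_simp
  ring

lemma sigma_pos (γ cσ : ℝ) (hγ : 0 < γ) (σ : ℝ → ℝ)
    (hσ : Tendsto (fun α => σ α - Real.sqrt (2 * α / γ)) atTop (nhds cσ)) :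
    ∀ᶠ α in atTop, 0 < σ α := by
  have h := sigma_sqrt γ cσ hγ σ hσ
  filter_upwards [h.eventually_const_lt (show 0 < √(2 / γ) by positivity),
    eventually_gt_atTop 0] with α h1 h2
  have : 0 < √α := Real.sqrt_pos.2 h2
  exact (div_pos_iff_of_pos_right this).1 h1

/-- The `k`-th factor of the rescaled normalization constant. -/
noncomputable def Ek (β γ : ℝ) (σ : ℝ → ℝ) (k : ℕ) (α : ℝ) : ℝ :=
  σ α ^ (1 + (k : ℝ) * β) * γ ^ (α + 1 + (k : ℝ) * β) * ((α / γ) ^ α * Real.exp (-α)) /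
    Real.Gamma (α + 1 + (k : ℝ) * β / 2)

lemma Ek_tendsto (β γ cσ : ℝ) (hβ : 0 < β) (hγ : 0 < γ) (σ : ℝ → ℝ)
    (hσ : Tendsto (fun α => σ α - Real.sqrt (2 * α / γ)) atTop (nhds cσ)) (k : ℕ) :
    Tendsto (Ek β γ σ k) atTop
      (nhds ((2 * γ) ^ ((1 + (k : ℝ) * β) / 2) / (2 * Real.pi) ^ ((1 : ℝ) / 2))) := by
  have h1 := logGamma_shift ((k : ℝ) * β / 2) (by positivity)
  have h2 := ((sigma_sqrt γ cσ hγ σ hσ).log (by positivity)).add_const (Real.log γ)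
  have h3 := ((h2.const_mul (1 + (k : ℝ) * β)).sub h1).rexp
  have e : Real.exp ((1 + (k : ℝ) * β) * (Real.log √(2 / γ) + Real.log γ) -
      Real.log (2 * Real.pi) / 2) =
      (2 * γ) ^ ((1 + (k : ℝ) * β) / 2) / (2 * Real.pi) ^ ((1 : ℝ) / 2) := by
    rw [Real.rpow_def_of_pos (by positivity), Real.rpow_def_of_pos (by positivity),
      ← Real.exp_sub, Real.log_sqrt (by positivity), Real.log_div (by norm_num) hγ.ne',
      Real.log_mul (x := 2) (y := γ) (by norm_num) hγ.ne']
    congr 1; ring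
  rw [e] at h3
  refine h3.congr' ?_
  filter_upwards [sigma_pos γ cσ hγ σ hσ, eventually_gt_atTop 0] with α hs hα
  have hG : 0 < Real.Gamma (α + 1 + (k : ℝ) * β / 2) := Real.Gamma_pos_of_pos (by positivity)
  unfold Ek
  have hG' := Real.exp_log hG
  generalize Real.log (Real.Gamma (α + 1 + (k : ℝ) * β / 2)) = lg at *
  rw [← hG']
  rw [Real.rpow_def_of_pos hs, Real.rpow_def_of_pos hγ, Real.rpow_def_of_pos (by positivity),
    ← Real.exp_add, ← Real.exp_add, ← Real.exp_add, ← Real.exp_sub,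
    Real.log_div hs.ne' (by positivity), Real.log_sqrt hα.le, Real.log_div hα.ne' hγ.ne']
  congr 1; ring

lemma log_quad {ι : Type*} (l : Filter ι) (a u : ι → ℝ) (L : ℝ) (ha : Tendsto a l atTop)
    (hu : Tendsto (fun i => √(a i) * u i) l (nhds L)) :
    Tendsto u l (nhds 0) ∧
    Tendsto (fun i => a i * (Real.log (1 + u i) - u i)) l (nhds (-L ^ 2 / 2)) := by
  have hs : Tendsto (fun i => √(a i)) l atTop := Real.tendsto_sqrt_atTop.comp ha
  have hu0 : Tendsto u l (nhds 0) := by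
    refine (hu.div_atTop hs).congr' ?_
    filter_upwards [hs.eventually_gt_atTop 0] with i hi
    field_simp
  refine ⟨hu0, ?_⟩
  have hsq : Tendsto (fun i => a i * u i ^ 2) l (nhds (L ^ 2)) := by
    refine (hu.pow 2).congr' ?_
    filter_upwards [ha.eventually_gt_atTop 0] with i hi
    rw [mul_pow, Real.sq_sqrt hi.le]
  have hb : Tendsto (fun i => (a i * u i ^ 2) * (|u i| / (1 - |u i|))) l (nhds 0) := by
    have hq := hu0.abs
    rw [abs_zero] at hq
    have := hsq.mul (hq.div (hq.const_sub 1) (by norm_num))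
    simpa using this
  have hr : Tendsto (fun i => a i * (Real.log (1 + u i) - u i + u i ^ 2 / 2)) l (nhds 0) := by
    refine squeeze_zero_norm' ?_ hb
    have hq := hu0.abs
    rw [abs_zero] at hq
    filter_upwards [ha.eventually_gt_atTop 0, hq.eventually_lt_const zero_lt_one] with i hi h1
    have := Real.abs_log_sub_add_sum_range_le (x := -u i) (by rwa [abs_neg]) 2
    simp only [Finset.sum_range_succ, Finset.sum_range_zero, abs_neg, sub_neg_eq_add] at this
    norm_num at this
    rw [Real.norm_eq_abs, abs_mul, abs_of_pos hi, mul_assoc]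
    refine mul_le_mul_of_nonneg_left ?_ hi.le
    calc _ = |-u i + u i ^ 2 / 2 + Real.log (1 + u i)| := by congr 1; ring
      _ ≤ _ := this
      _ = _ := by rw [← sq_abs (u i)]; ring
  have := hr.sub (hsq.div_const 2)
  rw [show 0 - L ^ 2 / 2 = -L ^ 2 / 2 by ring] at this
  exact this.congr fun i => by ring

/-- normalized one-particle weight -/
noncomputable def Gw (γ : ℝ) (μ σ : ℝ → ℝ) (α t : ℝ) : ℝ :=
  (if 0 < μ α + σ α * t then (μ α + σ α * t) ^ α * Real.exp (-γ * (μ α + σ α * t)) else 0) /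
    ((α / γ) ^ α * Real.exp (-α))

lemma Gw_tendsto {ι : Type*} (l : Filter ι) (a s : ι → ℝ) (t : ℝ)
    (ha : Tendsto a l atTop) (hs : Tendsto s l (nhds t))
    (γ cμ cσ : ℝ) (hγ : 0 < γ) (μ σ : ℝ → ℝ)
    (hμ : Tendsto (fun α => μ α - α / γ) atTop (nhds cμ))
    (hσ : Tendsto (fun α => σ α - Real.sqrt (2 * α / γ)) atTop (nhds cσ)) :
    Tendsto (fun i => Gw γ μ σ (a i) (s i)) l (nhds (Real.exp (-γ * t ^ 2))) := by
  have hq : Tendsto (fun i => √(a i)) l atTop := Real.tendsto_sqrt_atTop.comp ha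
  have h1 : Tendsto (fun i => γ * ((μ (a i) - a i / γ) / √(a i) + σ (a i) / √(a i) * s i)) l
      (nhds (γ * (0 + √(2 / γ) * t))) :=
    (((hμ.comp ha).div_atTop hq).add (((sigma_sqrt γ cσ hγ σ hσ).comp ha).mul hs)).const_mul γ
  have h2 : Tendsto (fun i => √(a i) * (γ * (μ (a i) + σ (a i) * s i) / a i - 1)) l
      (nhds (γ * (0 + √(2 / γ) * t))) := by
    refine h1.congr' ?_
    filter_upwards [ha.eventually_gt_atTop 0] with i hi
    have hp : 0 < √(a i) := Real.sqrt_pos.2 hi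
    have he : a i = √(a i) ^ 2 := (Real.sq_sqrt hi.le).symm
    generalize μ (a i) = m
    generalize σ (a i) = z
    generalize √(a i) = q at *
    rw [he]
    field_simp
    ring
  obtain ⟨h3, h4⟩ := log_quad l a _ _ ha h2
  have e : -(γ * (0 + √(2 / γ) * t)) ^ 2 / 2 = -γ * t ^ 2 := by
    rw [zero_add, mul_pow, mul_pow, Real.sq_sqrt (by positivity)]
    field_simp
  rw [e] at h4
  refine h4.rexp.congr' ?_
  filter_upwards [ha.eventually_gt_atTop 0,
    h3.eventually_const_lt (show (-1 : ℝ) < 0 by norm_num)] with i hi h5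
  have hY : 0 < μ (a i) + σ (a i) * s i := by
    have : 0 < γ * (μ (a i) + σ (a i) * s i) / a i := by linarith
    have := (div_pos_iff_of_pos_right hi).1 this
    exact (mul_pos_iff_of_pos_left hγ).1 this
  unfold Gw
  rw [if_pos hY]
  generalize μ (a i) + σ (a i) * s i = Y at *
  rw [Real.rpow_def_of_pos hY, Real.rpow_def_of_pos (by positivity), ← Real.exp_add,
    ← Real.exp_add, ← Real.exp_sub, add_sub_cancel, Real.log_div (by positivity) hi.ne',
    Real.log_mul hγ.ne' hY.ne', Real.log_div hi.ne' hγ.ne']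
  congr 1
  field_simp
  ring

lemma vdm_card (n : ℕ) :
    (Finset.univ.filter (fun p : Fin n × Fin n => p.2 < p.1)).card = ∑ k ∈ Finset.range n, k := by
  rw [Finset.card_filter, ← Finset.univ_product_univ, Finset.sum_product,
    ← Fin.sum_univ_eq_sum_range (fun k => k)]
  refine Finset.sum_congr rfl fun i _ => ?_
  rw [← Finset.card_filter]
  have : Finset.univ.filter (fun j : Fin n => j < i) = Finset.Iio i := by ext; simp
  simp [this]

lemma vdm_scale (n : ℕ) (m s : ℝ) (x : Fin n → ℝ) :
    vdm n (fun i => m + s * x i) = s ^ (∑ k ∈ Finset.range n, k) * vdm n x := by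
  unfold vdm
  rw [← vdm_card, ← Finset.prod_const, ← Finset.prod_mul_distrib]
  exact Finset.prod_congr rfl fun p _ => by ring

lemma vdm_cont (n : ℕ) : Continuous (vdm n) := by
  unfold vdm; fun_prop

lemma pG_cont (n : ℕ) (β γ : ℝ) (hβ : 0 < β) : Continuous (pG n β γ) := by
  unfold pG
  have := ((vdm_cont n).abs).rpow_const (p := β) (fun _ => Or.inr hβ.le)
  fun_prop

lemma sig_pow (n : ℕ) (β s : ℝ) (hs : 0 < s) :
    s ^ n * (s ^ (∑ k ∈ Finset.range n, k)) ^ β = ∏ k ∈ Finset.range n, s ^ (1 + (k : ℝ) * β) := by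
  induction n with
  | zero => simp
  | succ n ih =>
    rw [Finset.prod_range_succ, ← ih, Finset.sum_range_succ, pow_add s (∑ k ∈ Finset.range n, k),
      Real.mul_rpow (by positivity) (by positivity), pow_succ, Real.rpow_add hs, Real.rpow_one,
      ← Real.rpow_natCast s n, Real.rpow_mul hs.le]
    ring

lemma pL_eq (n : ℕ) (β γ α : ℝ) (hβ : 0 < β) (hγ : 0 < γ) (hα : 0 < α) (μ σ : ℝ → ℝ)
    (hs : 0 < σ α) (x : Fin n → ℝ) :
    σ α ^ n * pL n β γ α (fun i => μ α + σ α * x i) =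
    ((n.factorial : ℝ) / Real.Gamma (β / 2) ^ n)⁻¹ *
      (∏ k ∈ Finset.range n, (Ek β γ σ k α / Real.Gamma (((k : ℝ) + 1) * β / 2))) *
      |vdm n x| ^ β * ∏ i, Gw γ μ σ α (x i) := by
  unfold pL ZL Gw Ek
  have hW : 0 < (α / γ) ^ α * Real.exp (-α) := by positivity
  rw [vdm_scale, abs_mul, abs_of_pos (by positivity), Real.mul_rpow (by positivity) (abs_nonneg _)]
  generalize (α / γ) ^ α * Real.exp (-α) = W at *
  rw [Finset.prod_div_distrib (s := Finset.univ), Finset.prod_const, Finset.card_univ,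
    Fintype.card_fin]
  have e : ∏ k ∈ Finset.range n, (σ α ^ (1 + (k : ℝ) * β) * γ ^ (α + 1 + (k : ℝ) * β) * W /
      Real.Gamma (α + 1 + (k : ℝ) * β / 2) / Real.Gamma (((k : ℝ) + 1) * β / 2)) =
      (σ α ^ n * (σ α ^ (∑ k ∈ Finset.range n, k)) ^ β) * W ^ n *
      (∏ k ∈ Finset.range n,
      Real.Gamma (α + 1 + (k : ℝ) * β / 2) * Real.Gamma (((k : ℝ) + 1) * β / 2) /
        γ ^ (α + 1 + (k : ℝ) * β))⁻¹ := by
    rw [sig_pow n β _ hs, ← Finset.prod_inv_distrib]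
    have : W ^ n = ∏ k ∈ Finset.range n, W := by simp
    rw [this, ← Finset.prod_mul_distrib, ← Finset.prod_mul_distrib]
    refine Finset.prod_congr rfl fun k _ => ?_
    rw [inv_div]
    field_simp
  rw [e, mul_inv]
  have : W ^ n ≠ 0 := by positivity
  generalize (∏ i, (if 0 < μ α + σ α * x i then
    (μ α + σ α * x i) ^ α * Real.exp (-γ * (μ α + σ α * x i)) else 0)) = P
  field_simp

lemma pG_eq (n : ℕ) (β γ : ℝ) (hγ : 0 < γ) (x : Fin n → ℝ) :
    pG n β γ x =
    ((n.factorial : ℝ) / Real.Gamma (β / 2) ^ n)⁻¹ *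
      (∏ k ∈ Finset.range n, ((2 * γ) ^ ((1 + (k : ℝ) * β) / 2) / (2 * Real.pi) ^ ((1 : ℝ) / 2) /
        Real.Gamma (((k : ℝ) + 1) * β / 2))) *
      |vdm n x| ^ β * ∏ i, Real.exp (-γ * (x i) ^ 2) := by
  unfold pG ZG
  have e : (2 * Real.pi) ^ ((n : ℝ) / 2) =
      ∏ k ∈ Finset.range n, (2 * Real.pi) ^ ((1 : ℝ) / 2) := by
    rw [Finset.prod_const, Finset.card_range, ← Real.rpow_natCast, ← Real.rpow_mul (by positivity)]
    congr 1; ring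
  rw [e, mul_comm (∏ k ∈ Finset.range n, (2 * Real.pi) ^ ((1 : ℝ) / 2)),
    mul_assoc ((n.factorial : ℝ) / Real.Gamma (β / 2) ^ n),
    ← Finset.prod_mul_distrib, mul_inv, ← Finset.prod_inv_distrib]
  congr 3
  refine Finset.prod_congr rfl fun k _ => ?_
  rw [mul_inv, inv_div]
  field_simp

/-- Laguerre-to-Gaussian transition: the rescaled Laguerre β-ensemble eigenvalue densities
converge locally uniformly, as `α → ∞`, to the Gaussian β-ensemble eigenvalue density. -/
theorem stmt0 (n : ℕ) (hn : 1 ≤ n) (β γ cμ cσ : ℝ) (hβ : 0 < β) (hγ : 0 < γ)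
    (μ σ : ℝ → ℝ)
    (hμ : Tendsto (fun α => μ α - α / γ) atTop (nhds cμ))
    (hσ : Tendsto (fun α => σ α - Real.sqrt (2 * α / γ)) atTop (nhds cσ)) :
    TendstoLocallyUniformly
      (fun α (x : Fin n → ℝ) => σ α ^ n * pL n β γ α (fun i => μ α + σ α * x i))
      (pG n β γ) atTop := by
  rw [tendstoLocallyUniformly_iff_forall_tendsto]
  intro x
  have hα : Tendsto (fun p : ℝ × (Fin n → ℝ) => p.1) (atTop ×ˢ nhds x) atTop := tendsto_fst
  have hy : Tendsto (fun p : ℝ × (Fin n → ℝ) => p.2) (atTop ×ˢ nhds x) (nhds x) := tendsto_snd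
  have h1 : Tendsto (fun p : ℝ × (Fin n → ℝ) => pG n β γ p.2) (atTop ×ˢ nhds x)
      (nhds (pG n β γ x)) := ((pG_cont n β γ hβ).tendsto x).comp hy
  have h2 : Tendsto (fun p : ℝ × (Fin n → ℝ) =>
      σ p.1 ^ n * pL n β γ p.1 (fun i => μ p.1 + σ p.1 * p.2 i)) (atTop ×ˢ nhds x)
      (nhds (pG n β γ x)) := by
    rw [pG_eq n β γ hγ]
    have hE := tendsto_finsetProd (Finset.range n) (fun k _ =>
      ((Ek_tendsto β γ cσ hβ hγ σ hσ k).comp hα).div_const (Real.Gamma (((k : ℝ) + 1) * β / 2)))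
    have hV : Tendsto (fun p : ℝ × (Fin n → ℝ) => |vdm n p.2| ^ β) (atTop ×ˢ nhds x)
        (nhds (|vdm n x| ^ β)) :=
      ((((vdm_cont n).abs).rpow_const (p := β) (fun _ => Or.inr hβ.le)).tendsto x).comp hy
    have hG := tendsto_finsetProd (Finset.univ : Finset (Fin n)) (fun i _ =>
      Gw_tendsto (atTop ×ˢ nhds x) (fun p : ℝ × (Fin n → ℝ) => p.1) (fun p => p.2 i) (x i) hα
        (((continuous_apply i).tendsto x).comp hy) γ cμ cσ hγ μ σ hμ hσ)
    refine (((hE.const_mul _).mul hV).mul hG).congr' ?_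
    filter_upwards [hα.eventually (sigma_pos γ cσ hγ σ hσ), hα.eventually_gt_atTop 0] with p hs hp
    exact (pL_eq n β γ p.1 hβ hγ hp μ σ hs p.2).symm
  exact (h1.prodMk_nhds h2).mono_right (nhds_le_uniformity _)
end

section
/- Fix an integer n ≥ 0 and real constants c_μ, c_σ, and let μ, σ : ℝ → ℝ satisfy μ(α) − α → c_μ and σ(α) − √(2α) → c_σ as α → +∞. Then the functions x ↦ σ(α)^{1/2} · φ_n^{(α)}(μ(α) + σ(α)x) converge locally uniformly on ℝ, as α → +∞, to the Hermite wave function x ↦ φ_n(x). (For each compact set of x the argument μ(α) + σ(α)x is eventually positive, so the left-hand side is eventually well defined.) -/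
open Filter

/-- The generalized Laguerre polynomial
`L_n^{(α)}(x) = ∑_{k=0}^n (−1)^k (Γ(n+α+1)/(Γ(k+α+1)(n−k)!k!)) x^k`. -/
noncomputable def laguerreL (n : ℕ) (α : ℝ) (x : ℝ) : ℝ :=
  ∑ k ∈ Finset.range (n + 1),
    (-1 : ℝ) ^ k *
      (Real.Gamma ((n : ℝ) + α + 1) /
        (Real.Gamma ((k : ℝ) + α + 1) * ((n - k).factorial : ℝ) * (k.factorial : ℝ))) *
      x ^ k

/-- The physicists' Hermite polynomials: `H_0 = 1`, `H_1 = 2x`,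
`H_{n+2}(x) = 2x·H_{n+1}(x) − 2(n+1)·H_n(x)`. -/
noncomputable def hermiteH : ℕ → ℝ → ℝ
  | 0, _ => 1
  | 1, x => 2 * x
  | (n + 2), x => 2 * x * hermiteH (n + 1) x - 2 * ((n : ℝ) + 1) * hermiteH n x

/-- The Laguerre wave function `φ_n^{(α)}(x) = √(n!/Γ(n+α+1)) x^{α/2} e^{−x/2} (−1)^n L_n^{(α)}(x)`. -/
noncomputable def phiL (n : ℕ) (α : ℝ) (x : ℝ) : ℝ :=
  Real.sqrt ((n.factorial : ℝ) / Real.Gamma ((n : ℝ) + α + 1)) * x ^ (α / 2) *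
    Real.exp (-x / 2) * (-1 : ℝ) ^ n * laguerreL n α x

/-- The Hermite wave function `φ_n(x) = e^{−x²/2} H_n(x)/(π^{1/4} √(2^n n!))`. -/
noncomputable def phiH (n : ℕ) (x : ℝ) : ℝ :=
  Real.exp (-x ^ 2 / 2) * hermiteH n x /
    (Real.pi ^ ((1 : ℝ) / 4) * Real.sqrt (2 ^ n * (n.factorial : ℝ)))

/-- The monic rescaling `(-1)^n n! L_n`. -/
noncomputable def monicL (n : ℕ) (α x : ℝ) : ℝ :=
  ∑ k ∈ Finset.range (n + 1),
    (-1 : ℝ) ^ (n + k) * (n.choose k : ℝ) *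
      (Real.Gamma ((n : ℝ) + α + 1) / Real.Gamma ((k : ℝ) + α + 1)) * x ^ k

lemma laguerreL_eq_monicL (n : ℕ) (α x : ℝ) :
    (-1 : ℝ) ^ n * laguerreL n α x = monicL n α x / n.factorial := by
  unfold laguerreL monicL
  rw [Finset.mul_sum, Finset.sum_div]
  refine Finset.sum_congr rfl fun k hk => ?_
  have hk' : k ≤ n := by simpa [Nat.lt_succ_iff] using hk
  rw [Nat.cast_choose ℝ hk', pow_add]
  have h1 : (n.factorial : ℝ) ≠ 0 := by positivity
  have h2 : (k.factorial : ℝ) ≠ 0 := by positivity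
  have h3 : ((n - k).factorial : ℝ) ≠ 0 := by positivity
  by_cases hG : Real.Gamma ((k : ℝ) + α + 1) = 0
  · simp [hG]
  · field_simp

lemma choose_rec (n k : ℕ) (α : ℝ) :
    ((n + 2).choose (k + 1) : ℝ) * (n + 2 + α) =
      ((n + 1).choose k : ℝ) * (k + 1 + α) + (2 * n + 3 + α) * ((n + 1).choose (k + 1) : ℝ)
        - (n + 1) * (n.choose (k + 1) : ℝ) := by
  have p1 : ((n + 2).choose (k + 1) : ℝ) = (n + 1).choose k + (n + 1).choose (k + 1) := by
    exact_mod_cast Nat.choose_succ_succ (n + 1) k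
  have p2 : ((n + 1).choose (k + 1) : ℝ) = n.choose k + n.choose (k + 1) := by
    exact_mod_cast Nat.choose_succ_succ n k
  have p3 : ((n : ℝ) + 1) * n.choose k = (n + 1).choose (k + 1) * (k + 1) := by
    exact_mod_cast Nat.add_one_mul_choose_eq n k
  have p4 : ((n : ℝ) + 1 + 1) * (n + 1).choose k = (n + 2).choose (k + 1) * (k + 1) := by
    exact_mod_cast Nat.add_one_mul_choose_eq (n + 1) k
  rw [p1] at p4 ⊢
  linear_combination p4 + (-(n : ℝ) - 1) * p2 - p3

lemma monicL_rec (n : ℕ) (α x : ℝ) (hα : 0 < α) :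
    monicL (n + 2) α x = (x - (2 * n + 3 + α)) * monicL (n + 1) α x
      - (n + 1) * (n + 1 + α) * monicL n α x := by
  have hG : ∀ k : ℕ, Real.Gamma ((k : ℝ) + α + 1) ≠ 0 := fun k =>
    (Real.Gamma_pos_of_pos (by positivity)).ne'
  have hS : ∀ k : ℕ, Real.Gamma (((k + 1 : ℕ) : ℝ) + α + 1)
      = (k + 1 + α) * Real.Gamma ((k : ℝ) + α + 1) := fun k => by
    push_cast
    rw [show (k : ℝ) + 1 + α + 1 = (k + α + 1) + 1 by ring,
      Real.Gamma_add_one (by positivity)]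
    ring
  have e1 : monicL (n + 1) α x = ∑ k ∈ Finset.range (n + 3),
    (-1 : ℝ) ^ (n + 1 + k) * ((n + 1).choose k : ℝ) *
      (Real.Gamma (((n + 1 : ℕ) : ℝ) + α + 1) / Real.Gamma ((k : ℝ) + α + 1)) * x ^ k := by
    rw [Finset.sum_range_succ]; simp [monicL]
  have e0 : monicL n α x = ∑ k ∈ Finset.range (n + 3),
    (-1 : ℝ) ^ (n + k) * (n.choose k : ℝ) *
      (Real.Gamma ((n : ℝ) + α + 1) / Real.Gamma ((k : ℝ) + α + 1)) * x ^ k := by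
    rw [Finset.sum_range_succ, Finset.sum_range_succ,
      Nat.choose_eq_zero_of_lt (show n < n + 2 by omega)]; simp [monicL]
  have key : monicL (n + 2) α x = x * monicL (n + 1) α x
      - (2 * n + 3 + α) * monicL (n + 1) α x - (n + 1) * (n + 1 + α) * monicL n α x := by
    rw [show x * monicL (n + 1) α x = ∑ k ∈ Finset.range (n + 2),
      (-1 : ℝ) ^ (n + 1 + k) * ((n + 1).choose k : ℝ) *
      (Real.Gamma (((n + 1 : ℕ) : ℝ) + α + 1) / Real.Gamma ((k : ℝ) + α + 1)) * x ^ (k + 1) by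
        rw [monicL, Finset.mul_sum]
        exact Finset.sum_congr rfl fun k _ => by ring]
    rw [e1, e0, monicL, Finset.sum_range_succ', Finset.sum_range_succ' _ (n + 2),
      Finset.sum_range_succ' _ (n + 2), mul_add, mul_add, Finset.mul_sum, Finset.mul_sum]
    have hz : (-1 : ℝ) ^ (n + 2 + 0) * ((n + 2).choose 0 : ℝ) *
        (Real.Gamma (((n + 2 : ℕ) : ℝ) + α + 1) / Real.Gamma (((0 : ℕ) : ℝ) + α + 1)) * x ^ 0 =
        - ((2 * n + 3 + α) * ((-1 : ℝ) ^ (n + 1 + 0) * ((n + 1).choose 0 : ℝ) *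
        (Real.Gamma (((n + 1 : ℕ) : ℝ) + α + 1) / Real.Gamma (((0 : ℕ) : ℝ) + α + 1)) * x ^ 0))
        - (n + 1) * (n + 1 + α) * ((-1 : ℝ) ^ (n + 0) * (n.choose 0 : ℝ) *
        (Real.Gamma ((n : ℝ) + α + 1) / Real.Gamma (((0 : ℕ) : ℝ) + α + 1)) * x ^ 0) := by
      rw [hS (n + 1), hS n]
      simp only [Nat.choose_zero_right]
      push_cast
      ring
    have hs : ∀ k ∈ Finset.range (n + 2),
        (-1 : ℝ) ^ (n + 2 + (k + 1)) * ((n + 2).choose (k + 1) : ℝ) *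
        (Real.Gamma (((n + 2 : ℕ) : ℝ) + α + 1) / Real.Gamma (((k + 1 : ℕ) : ℝ) + α + 1))
          * x ^ (k + 1) =
        (-1 : ℝ) ^ (n + 1 + k) * ((n + 1).choose k : ℝ) *
        (Real.Gamma (((n + 1 : ℕ) : ℝ) + α + 1) / Real.Gamma ((k : ℝ) + α + 1)) * x ^ (k + 1)
        - (2 * n + 3 + α) * ((-1 : ℝ) ^ (n + 1 + (k + 1)) * ((n + 1).choose (k + 1) : ℝ) *
        (Real.Gamma (((n + 1 : ℕ) : ℝ) + α + 1) / Real.Gamma (((k + 1 : ℕ) : ℝ) + α + 1))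
          * x ^ (k + 1))
        - (n + 1) * (n + 1 + α) * ((-1 : ℝ) ^ (n + (k + 1)) * (n.choose (k + 1) : ℝ) *
        (Real.Gamma ((n : ℝ) + α + 1) / Real.Gamma (((k + 1 : ℕ) : ℝ) + α + 1))
          * x ^ (k + 1)) := by
      intro k _
      rw [hS (n + 1), hS n, hS k]
      have hk := hG k
      have hk1 : (k : ℝ) + 1 + α ≠ 0 := by positivity
      have hc := choose_rec n k α
      push_cast
      field_simp
      ring_nf at hc ⊢
      linear_combination (-(-1) ^ n * (-1) ^ k * x * x ^ k) * hc
    rw [Finset.sum_congr rfl hs, hz, Finset.sum_sub_distrib, Finset.sum_sub_distrib]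
    ring
  rw [key]; ring

/-- The Stirling defect. -/
noncomputable def stirS (x : ℝ) : ℝ :=
  Real.log (Real.Gamma (x + 1)) - x * Real.log x + x - Real.log x / 2

lemma stirS_nat : Tendsto (fun n : ℕ => stirS n) atTop (nhds (Real.log (2 * Real.pi) / 2)) := by
  have h := (Real.continuousAt_log (x := √Real.pi) (by positivity)).tendsto.comp
    Stirling.tendsto_stirlingSeq_sqrt_pi
  have h2 := h.add_const (Real.log 2 / 2)
  have e : Real.log (√Real.pi) + Real.log 2 / 2 = Real.log (2 * Real.pi) / 2 := by
    rw [Real.log_sqrt (by positivity), Real.log_mul (by norm_num) (by positivity)]; ring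
  rw [e] at h2
  refine h2.congr' ?_
  filter_upwards [eventually_gt_atTop 0] with n hn
  have hn' : (0 : ℝ) < n := by exact_mod_cast hn
  simp only [Function.comp, stirS]
  rw [Stirling.log_stirlingSeq_formula, Real.Gamma_nat_eq_factorial,
    Real.log_mul (by norm_num) hn'.ne', Real.log_div hn'.ne' (by positivity), Real.log_exp]
  ring

lemma stirS_close (n : ℕ) (hn : 1 ≤ n) (s : ℝ) (hs : 0 ≤ s) (hs1 : s ≤ 1) :
    |stirS (n + s) - stirS n| ≤ 2 / n := by
  have hn1 : (1 : ℝ) ≤ n := by exact_mod_cast hn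
  have hn' : (0 : ℝ) < n := by linarith
  rcases hs.eq_or_lt with rfl | hs0
  · simp only [add_zero, sub_self, abs_zero]; positivity
  have hfeq : ∀ {y : ℝ}, 0 < y →
      (Real.log ∘ Real.Gamma) (y + 1) = (Real.log ∘ Real.Gamma) y + Real.log y := by
    intro y hy
    simp only [Function.comp]
    rw [Real.Gamma_add_one hy.ne', Real.log_mul hy.ne' (Real.Gamma_pos_of_pos hy).ne']
    ring
  have up := Real.BohrMollerup.f_add_nat_le (n := n + 1) Real.convexOn_log_Gamma hfeq
    (by omega) hs0 hs1
  have lo := Real.BohrMollerup.f_add_nat_ge (n := n + 1) Real.convexOn_log_Gamma hfeq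
    (by omega) hs0
  simp only [Function.comp] at up lo
  push_cast at up lo
  rw [show (n : ℝ) + 1 + s = n + s + 1 by ring] at up lo
  rw [show (n : ℝ) + 1 - 1 = n by ring] at lo
  have hx : (0 : ℝ) < n + s := by linarith
  -- d = log (x / n)
  have d1 : Real.log (n + s) - Real.log n ≤ s / n := by
    rw [← Real.log_div hx.ne' hn'.ne']
    refine (Real.log_le_sub_one_of_pos (by positivity)).trans (le_of_eq ?_)
    field_simp; ring
  have d2 : s / (n + s) ≤ Real.log (n + s) - Real.log n := by
    rw [← Real.log_div hx.ne' hn'.ne']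
    refine le_trans (le_of_eq ?_) (Real.one_sub_inv_le_log_of_pos (by positivity))
    field_simp; ring
  have d3 : Real.log (n + 1) - Real.log n ≤ 1 / n := by
    rw [← Real.log_div (by positivity) hn'.ne']
    refine (Real.log_le_sub_one_of_pos (by positivity)).trans (le_of_eq ?_)
    field_simp; ring
  have d4 : n * (s / (n + s)) ≥ s - 1 / n := by
    have : n * (s / (n + s)) = s - s * s / (n + s) := by field_simp; ring
    rw [this]
    have : s * s / (n + s) ≤ 1 / n := by
      rw [div_le_div_iff₀ hx hn']
      have hss : s * s ≤ 1 := by nlinarith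
      nlinarith [mul_le_mul_of_nonneg_right hss hn'.le]
    linarith
  have d5 : n * (s / n) = s := by field_simp
  have d6 : s / n ≤ 1 / n := by gcongr
  have d7 : 0 ≤ s / (n + s) := by positivity
  have d8 : (0:ℝ) < 1 / n := by positivity
  have e2 : (2 : ℝ) / n = 2 * (1 / n) := by ring
  unfold stirS
  set D := Real.log (n + s) - Real.log n with hD
  have hl : Real.log (n + s) = Real.log n + D := by rw [hD]; ring
  rw [hl]
  have f1 := mul_le_mul_of_nonneg_left d1 hn'.le
  have f2 := mul_le_mul_of_nonneg_left d2 hn'.le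
  have f3 := mul_le_mul_of_nonneg_left d3 hs
  have f4 : s * (1 / n) ≤ 1 / n := by nlinarith
  have f5 : s * D ≤ D := by nlinarith
  have f6 : 0 ≤ s * D := mul_nonneg hs (d7.trans d2)
  rw [e2, abs_le]
  constructor <;> nlinarith

lemma stirS_real : Tendsto stirS atTop (nhds (Real.log (2 * Real.pi) / 2)) := by
  have h1 : Tendsto (fun x : ℝ => stirS (⌊x⌋₊ : ℝ)) atTop
      (nhds (Real.log (2 * Real.pi) / 2)) := stirS_nat.comp tendsto_nat_floor_atTop
  have h2 : Tendsto (fun x : ℝ => stirS x - stirS (⌊x⌋₊ : ℝ)) atTop (nhds 0) := by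
    have h3 : Tendsto (fun x : ℝ => 2 / (⌊x⌋₊ : ℝ)) atTop (nhds 0) :=
      (tendsto_const_div_atTop_nhds_zero_nat 2).comp tendsto_nat_floor_atTop
    refine squeeze_zero_norm' ?_ h3
    filter_upwards [eventually_ge_atTop 1] with x hx
    have := stirS_close ⌊x⌋₊ (by rwa [Nat.one_le_floor_iff]) (x - ⌊x⌋₊)
      (by linarith [Nat.floor_le (show 0 ≤ x by linarith)])
      (by linarith [Nat.lt_floor_add_one x])
    simpa using this
  simpa using h2.add h1

lemma gamma_shift (n : ℕ) : Tendsto (fun a : ℝ => Real.log (Real.Gamma (n + a + 1))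
    - Real.log (Real.Gamma (a + 1)) - n * Real.log a) atTop (nhds 0) := by
  induction n with
  | zero => simp
  | succ n ih =>
    have h1 : Tendsto (fun a : ℝ => 1 + ((n : ℝ) + 1) / a) atTop (nhds (1 + 0)) :=
      tendsto_const_nhds.add (tendsto_const_nhds.div_atTop tendsto_id)
    rw [add_zero] at h1
    have h2 := ((Real.continuousAt_log (x := 1) one_ne_zero).tendsto.comp h1).add ih
    simp only [Real.log_one, add_zero] at h2
    refine h2.congr' ?_
    filter_upwards [eventually_gt_atTop 0] with a ha
    have hp : 0 < (n : ℝ) + a + 1 := by positivity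
    push_cast
    rw [show (n : ℝ) + 1 + a + 1 = (n + a + 1) + 1 by ring, Real.Gamma_add_one hp.ne',
      Real.log_mul hp.ne' (Real.Gamma_pos_of_pos hp).ne']
    simp only [Function.comp]
    rw [show 1 + ((n : ℝ) + 1) / a = (n + a + 1) / a by field_simp; ring,
      Real.log_div hp.ne' ha.ne']
    ring

/-- The rescaled monic Laguerre polynomial. -/
noncomputable def scaledL (n : ℕ) (a y : ℝ) : ℝ := (2 / √(2 * a)) ^ n * monicL n a y

lemma scaledL_tendsto {ι : Type*} {l : Filter ι} {a y : ι → ℝ} {t₀ : ℝ}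
    (ha : Tendsto a l atTop)
    (ht : Tendsto (fun i => (y i - a i) / √(2 * a i)) l (nhds t₀)) (n : ℕ) :
    Tendsto (fun i => scaledL n (a i) (y i)) l (nhds (hermiteH n t₀)) := by
  have hr : Tendsto (fun i => √(2 * a i)) l atTop :=
    Real.tendsto_sqrt_atTop.comp (ha.const_mul_atTop (by norm_num : (0:ℝ) < 2))
  have hpos : ∀ᶠ i in l, 0 < a i := ha.eventually_gt_atTop 0
  induction n using Nat.strong_induction_on with
  | _ n ih =>
  match n, ih with
  | 0, _ =>
    refine (tendsto_const_nhds (x := (1:ℝ))).congr' ?_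
    filter_upwards [hpos] with i hi
    have : Real.Gamma (a i + 1) ≠ 0 := (Real.Gamma_pos_of_pos (by positivity)).ne'
    simp [scaledL, monicL, this]
  | 1, _ =>
    have h1 : Tendsto (fun i => 2 * ((y i - a i) / √(2 * a i)) - 2 / √(2 * a i)) l
        (nhds (2 * t₀ - 0)) := (ht.const_mul 2).sub (tendsto_const_nhds.div_atTop hr)
    rw [sub_zero] at h1
    refine h1.congr' ?_
    filter_upwards [hpos] with i hi
    have hg : Real.Gamma (a i + 1) ≠ 0 := (Real.Gamma_pos_of_pos (by positivity)).ne'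
    have hg2 : Real.Gamma (1 + a i + 1) = (1 + a i) * Real.Gamma (a i + 1) := by
      rw [show 1 + a i + 1 = (a i + 1) + 1 by ring, Real.Gamma_add_one (by positivity)]; ring
    have h1a : 1 + a i ≠ 0 := by positivity
    have hs : √(2 * a i) ≠ 0 := by positivity
    simp only [scaledL, monicL, Finset.sum_range_succ, Finset.sum_range_zero]
    simp [hg2]
    field_simp
    ring
  | n + 2, ih =>
    have i1 := ih (n + 1) (by omega)
    have i0 := ih n (by omega)
    have c1 : Tendsto (fun i => 2 * ((y i - a i) / √(2 * a i))
        - (2 * (2 * (n : ℝ) + 3)) / √(2 * a i)) l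
        (nhds (2 * t₀ - 0)) := (ht.const_mul 2).sub (tendsto_const_nhds.div_atTop hr)
    have c0 : Tendsto (fun i => 2 * ((n : ℝ) + 1) * (1 + ((n : ℝ) + 1) / a i)) l
        (nhds (2 * ((n : ℝ) + 1) * (1 + 0))) :=
      (tendsto_const_nhds.add (tendsto_const_nhds.div_atTop ha)).const_mul _
    have h := (c1.mul i1).sub (c0.mul i0)
    rw [sub_zero, add_zero, mul_one] at h
    rw [hermiteH]
    refine h.congr' ?_
    filter_upwards [hpos] with i hi
    have hs : 0 < √(2 * a i) := by positivity
    have hsq : √(2 * a i) ^ 2 = 2 * a i := Real.sq_sqrt (by positivity)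
    have hai : a i = √(2 * a i) ^ 2 / 2 := by rw [hsq]; ring
    simp only [scaledL]
    rw [monicL_rec n (a i) (y i) hi]
    generalize monicL (n + 1) (a i) (y i) = A
    generalize monicL n (a i) (y i) = B
    generalize √(2 * a i) = r at *
    rw [hai, pow_add, pow_add]
    generalize (2 / r) ^ n = Q
    field_simp
    ring

lemma log_part {ι : Type*} {l : Filter ι} {a y : ι → ℝ} {t₀ : ℝ}
    (ha : Tendsto a l atTop)
    (ht : Tendsto (fun i => (y i - a i) / √(2 * a i)) l (nhds t₀)) :
    (∀ᶠ i in l, 0 < y i) ∧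
    Tendsto (fun i => a i * (Real.log (y i) - Real.log (a i)) - (y i - a i)) l
      (nhds (-t₀ ^ 2)) := by
  have hr : Tendsto (fun i => √(2 * a i)) l atTop :=
    Real.tendsto_sqrt_atTop.comp (ha.const_mul_atTop (by norm_num : (0:ℝ) < 2))
  have hpos : ∀ᶠ i in l, 0 < a i := ha.eventually_gt_atTop 0
  have hs : Tendsto (fun i => (y i - a i) / a i) l (nhds 0) := by
    have h : Tendsto (fun i => (y i - a i) / √(2 * a i) * (2 / √(2 * a i))) l (nhds (t₀ * 0)) :=
      ht.mul (tendsto_const_nhds.div_atTop hr)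
    rw [mul_zero] at h
    refine h.congr' ?_
    filter_upwards [hpos] with i hi
    have hsq : √(2 * a i) ^ 2 = 2 * a i := Real.sq_sqrt (by positivity)
    have hs : 0 < √(2 * a i) := by positivity
    generalize √(2 * a i) = r at *
    field_simp
    rw [hsq]; ring
  have hsm : ∀ᶠ i in l, |(y i - a i) / a i| < 1 := by
    have := hs.abs
    rw [abs_zero] at this
    exact this.eventually_lt_const one_pos
  refine ⟨?_, ?_⟩
  · filter_upwards [hpos, hsm] with i hi h
    have := (abs_lt.1 h).1
    rw [lt_div_iff₀ hi] at this
    linarith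
  · have h2 : Tendsto (fun i => -((y i - a i) / √(2 * a i)) ^ 2) l (nhds (-t₀ ^ 2)) :=
      (ht.pow 2).neg
    have h3 : Tendsto (fun i => a i * (Real.log (y i) - Real.log (a i)) - (y i - a i)
        - (-((y i - a i) / √(2 * a i)) ^ 2)) l (nhds 0) := by
      have h4 : Tendsto (fun i => 2 * ((y i - a i) / √(2 * a i)) ^ 2 *
          (|(y i - a i) / a i| / (1 - |(y i - a i) / a i|))) l
          (nhds (2 * t₀ ^ 2 * (|0| / (1 - |0|)))) :=
        ((ht.pow 2).const_mul 2).mul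
          (hs.abs.div (tendsto_const_nhds.sub hs.abs) (by simp))
      rw [abs_zero, zero_div, mul_zero] at h4
      refine squeeze_zero_norm' ?_ h4
      filter_upwards [hpos, hsm] with i hi h
      have hb := Real.abs_log_sub_add_sum_range_le (x := -((y i - a i) / a i))
        (by rwa [abs_neg]) 2
      have hsq : √(2 * a i) ^ 2 = 2 * a i := Real.sq_sqrt (by positivity)
      have hT : ((y i - a i) / √(2 * a i)) ^ 2 = a i * ((y i - a i) / a i) ^ 2 / 2 := by
        rw [div_pow, hsq]; field_simp
      have hyy : y i - a i = a i * ((y i - a i) / a i) := by field_simp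
      have hyp : 0 < y i := by
        have := (abs_lt.1 h).1
        rw [lt_div_iff₀ hi] at this
        linarith
      have hlog : Real.log (y i) - Real.log (a i) = Real.log (1 + (y i - a i) / a i) := by
        rw [← Real.log_div hyp.ne' hi.ne']
        congr 1; field_simp; ring
      rw [hT, hlog]
      generalize hS : (y i - a i) / a i = s at *
      rw [hyy]
      simp only [Finset.sum_range_succ, Finset.sum_range_zero, abs_neg, sub_neg_eq_add] at hb
      rw [Real.norm_eq_abs]
      have e1 : a i * Real.log (1 + s) - a i * s - -(a i * s ^ 2 / 2) =
        a i * (0 + (-s) ^ (0 + 1) / ((0 : ℕ) + 1) + (-s) ^ (1 + 1) / ((1 : ℕ) + 1)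
          + Real.log (1 + s)) := by push_cast; ring
      rw [e1, abs_mul, abs_of_pos hi]
      refine (mul_le_mul_of_nonneg_left hb hi.le).trans (le_of_eq ?_)
      rw [← sq_abs s]
      ring
    simpa using h3.add h2

lemma phiL_factor (n : ℕ) (a y s : ℝ) (ha : 0 < a) (hy : 0 < y) :
    √s * phiL n a y = √(s / √(2 * a)) *
      Real.exp ((Real.log (2 * a) / 2 - Real.log (Real.Gamma (n + a + 1))
        + a * Real.log y - y + n * Real.log a) / 2) *
      (scaledL n a y / √(2 ^ n * (n.factorial : ℝ))) := by
  have hr : 0 < √(2 * a) := by positivity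
  have hG : 0 < Real.Gamma ((n : ℝ) + a + 1) := Real.Gamma_pos_of_pos (by positivity)
  have es : √s = √(s / √(2 * a)) * √(√(2 * a)) := by
    rw [← Real.sqrt_mul' _ hr.le, div_mul_cancel₀ _ hr.ne']
  have sq_exp : ∀ z : ℝ, 0 < z → √z = Real.exp (Real.log z / 2) := fun z hz => by
    rw [← Real.log_sqrt hz.le, Real.exp_log (by positivity)]
  have er : √(√(2 * a)) = Real.exp (Real.log (2 * a) / 2 / 2) := by
    rw [sq_exp _ hr, Real.log_sqrt (by positivity)]
  have eG : √((n.factorial : ℝ) / Real.Gamma ((n : ℝ) + a + 1)) =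
      √(n.factorial : ℝ) * Real.exp (-Real.log (Real.Gamma ((n : ℝ) + a + 1)) / 2) := by
    rw [Real.sqrt_div (by positivity), sq_exp _ hG, neg_div, Real.exp_neg, div_eq_mul_inv]
  have ey : y ^ (a / 2) = Real.exp (a * Real.log y / 2) := by
    rw [Real.rpow_def_of_pos hy]; congr 1; ring
  have ea : √a ^ n = Real.exp (n * Real.log a / 2) := by
    rw [sq_exp a ha, ← Real.exp_nat_mul]; congr 1; ring
  have esc : scaledL n a y / √(2 ^ n * (n.factorial : ℝ)) =
      monicL n a y / (√a ^ n * √(n.factorial : ℝ)) := by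
    rw [scaledL, Real.sqrt_mul (by positivity), Real.sqrt_mul (by positivity)]
    have h2 : √((2 : ℝ) ^ n) = √2 ^ n := by
      rw [Real.sqrt_eq_iff_eq_sq (by positivity) (by positivity), ← pow_mul, mul_comm n 2,
        pow_mul, Real.sq_sqrt (by norm_num)]
    have h3 : (2 : ℝ) / (√2 * √a) = √2 / √a := by
      have : √(2 : ℝ) ^ 2 = 2 := Real.sq_sqrt (by norm_num)
      have h0 : 0 < √a := by positivity
      have h1 : 0 < √(2 : ℝ) := by positivity
      rw [div_eq_div_iff (by positivity) (by positivity)]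
      linear_combination (-√a) * this
    rw [h2, h3, div_pow]
    have h0 : 0 < √a := by positivity
    field_simp
  have hf : (n.factorial : ℝ) = √(n.factorial : ℝ) ^ 2 := (Real.sq_sqrt (by positivity)).symm
  have hf0 : 0 < √(n.factorial : ℝ) := by positivity
  have eexp : Real.exp ((Real.log (2 * a) / 2 - Real.log (Real.Gamma (n + a + 1))
        + a * Real.log y - y + n * Real.log a) / 2) =
      Real.exp (Real.log (2 * a) / 2 / 2) *
      Real.exp (-Real.log (Real.Gamma ((n : ℝ) + a + 1)) / 2) *
      Real.exp (a * Real.log y / 2) * Real.exp (-y / 2) * Real.exp (n * Real.log a / 2) := by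
    rw [← Real.exp_add, ← Real.exp_add, ← Real.exp_add, ← Real.exp_add]; congr 1; ring
  have hL : phiL n a y = √((n.factorial : ℝ) / Real.Gamma ((n : ℝ) + a + 1)) * y ^ (a / 2) *
      Real.exp (-y / 2) * (monicL n a y / n.factorial) := by
    rw [phiL, ← laguerreL_eq_monicL]; ring
  rw [hL, esc, eexp, eG, ey, ← ea, es, er]
  have h0 : 0 < √a ^ n := by positivity
  rw [show monicL n a y / (n.factorial : ℝ) = monicL n a y / √(n.factorial : ℝ) ^ 2 by rw [← hf]]
  field_simp

lemma core_tendsto {ι : Type*} {l : Filter ι} {a y s : ι → ℝ} {t₀ : ℝ} (n : ℕ)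
    (ha : Tendsto a l atTop)
    (ht : Tendsto (fun i => (y i - a i) / √(2 * a i)) l (nhds t₀))
    (hs : Tendsto (fun i => s i / √(2 * a i)) l (nhds 1)) :
    Tendsto (fun i => √(s i) * phiL n (a i) (y i)) l (nhds (phiH n t₀)) := by
  obtain ⟨hy, hlog⟩ := log_part ha ht
  have hpos : ∀ᶠ i in l, 0 < a i := ha.eventually_gt_atTop 0
  have h1 : Tendsto (fun i => Real.log (2 * a i) / 2 - Real.log (Real.Gamma (n + a i + 1))
        + a i * Real.log (y i) - y i + n * Real.log (a i)) l
        (nhds (-t₀ ^ 2 - Real.log Real.pi / 2)) := by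
    have h := ((hlog.sub ((gamma_shift n).comp ha)).sub (stirS_real.comp ha)).add_const
      (Real.log 2 / 2)
    have e : -t₀ ^ 2 - 0 - Real.log (2 * Real.pi) / 2 + Real.log 2 / 2 =
        -t₀ ^ 2 - Real.log Real.pi / 2 := by
      rw [Real.log_mul (by norm_num) (by positivity)]; ring
    rw [e] at h
    refine h.congr' ?_
    filter_upwards [hpos] with i hi
    simp only [Function.comp, stirS]
    rw [Real.log_mul (by norm_num) hi.ne']
    ring
  have h2 := (Real.continuous_exp.tendsto _).comp (h1.div_const 2)
  have h3 := (scaledL_tendsto ha ht n).div_const (√(2 ^ n * (n.factorial : ℝ)))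
  have h4 := ((Real.continuous_sqrt.tendsto _).comp hs).mul h2 |>.mul h3
  have e : √1 * Real.exp ((-t₀ ^ 2 - Real.log Real.pi / 2) / 2) *
      (hermiteH n t₀ / √(2 ^ n * (n.factorial : ℝ))) = phiH n t₀ := by
    rw [phiH, Real.sqrt_one, Real.rpow_def_of_pos Real.pi_pos,
      show (-t₀ ^ 2 - Real.log Real.pi / 2) / 2 =
        -t₀ ^ 2 / 2 + -(Real.log Real.pi * (1 / 4)) by ring, Real.exp_add, Real.exp_neg]
    field_simp
  rw [e] at h4
  refine h4.congr' ?_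
  filter_upwards [hpos, hy] with i hi hyi
  rw [phiL_factor n (a i) (y i) (s i) hi hyi]
  rfl

lemma continuous_hermiteH (n : ℕ) : Continuous (hermiteH n) := by
  induction n using Nat.strong_induction_on with
  | _ n ih =>
  match n, ih with
  | 0, _ => exact continuous_const
  | 1, _ => exact continuous_const.mul continuous_id
  | n + 2, ih =>
    have i1 := ih (n + 1) (by omega)
    have i0 := ih n (by omega)
    have : hermiteH (n + 2) = fun x => 2 * x * hermiteH (n + 1) x
        - 2 * ((n : ℝ) + 1) * hermiteH n x := by
      funext x; rw [hermiteH]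
    rw [this]
    fun_prop

lemma continuous_phiH (n : ℕ) : Continuous (phiH n) := by
  have := continuous_hermiteH n
  unfold phiH
  fun_prop

/-- Laguerre-to-Hermite wave function transition: `σ(α)^{1/2} φ_n^{(α)}(μ(α)+σ(α)x)`
converges locally uniformly to `φ_n(x)` as `α → +∞`. -/
theorem stmt4 (n : ℕ) (cμ cσ : ℝ) (μ σ : ℝ → ℝ)
    (hμ : Tendsto (fun α => μ α - α) atTop (nhds cμ))
    (hσ : Tendsto (fun α => σ α - Real.sqrt (2 * α)) atTop (nhds cσ)) :
    TendstoLocallyUniformly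
      (fun α (x : ℝ) => Real.sqrt (σ α) * phiL n α (μ α + σ α * x))
      (phiH n) atTop := by
  rw [tendstoLocallyUniformly_iff_forall_tendsto]
  intro x₀
  have hfst : Tendsto (fun p : ℝ × ℝ => p.1) (atTop ×ˢ nhds x₀) atTop := tendsto_fst
  have hsnd : Tendsto (fun p : ℝ × ℝ => p.2) (atTop ×ˢ nhds x₀) (nhds x₀) := tendsto_snd
  have hr : Tendsto (fun a : ℝ => √(2 * a)) atTop atTop :=
    Real.tendsto_sqrt_atTop.comp (tendsto_id.const_mul_atTop (by norm_num : (0:ℝ) < 2))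
  have hs : Tendsto (fun a => σ a / √(2 * a)) atTop (nhds 1) := by
    have h := (hσ.div_atTop hr).add_const 1
    rw [zero_add] at h
    refine h.congr' ?_
    filter_upwards [eventually_gt_atTop 0] with a ha
    have : √(2 * a) ≠ 0 := by positivity
    field_simp
    ring
  have hm : Tendsto (fun a => (μ a - a) / √(2 * a)) atTop (nhds 0) := hμ.div_atTop hr
  have ht : Tendsto (fun p : ℝ × ℝ => (μ p.1 + σ p.1 * p.2 - p.1) / √(2 * p.1))
      (atTop ×ˢ nhds x₀) (nhds x₀) := by
    have h := (hm.comp hfst).add ((hs.comp hfst).mul hsnd)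
    rw [zero_add, one_mul] at h
    refine h.congr fun p => ?_
    simp only [Function.comp]
    ring
  have hF := core_tendsto n hfst ht (hs.comp hfst)
  have hf := ((continuous_phiH n).tendsto x₀).comp hsnd
  exact (hf.prodMk_nhds hF).mono_right (nhds_le_uniformity (phiH n x₀))
end

section
/- Let Q_k ∈ ℚ[X] (k ≥ 1) be defined by Q_1 = −(3X² + 2)/8 and Q_{k+1} = (3/2)(k+1)·X·Q_k − (1/2)(X² − 1)·Q_k′ − (1/2)·∑_{j=1}^{k−1} Q_j·Q_{k−j}. Then for every k ≥ 1: (i) there is exactly one polynomial P ∈ ℚ[X] satisfying (X² − 1)·P′ − 3(2k−1)·X·P = Q_{2k−1}; it is an odd polynomial of degree exactly 6k−3 whose leading coefficient equals 2^{2k−1}·B_{2k}(1/2)/(4k(2k−1)), where B_{2k}(1/2) = (2^{1−2k} − 1)·B_{2k} with B_{2k} the 2k-th Bernoulli number; and (ii) there is exactly one polynomial P ∈ ℚ[X] of degree < 6k satisfying (X² − 1)·P′ − 6k·X·P = Q_{2k}; it is an even polynomial of degree exactly 2k. -/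
open Polynomial

/-- The polynomials `Q_k ∈ ℚ[X]`: `Q_1 = −(3X²+2)/8` and
`Q_{k+1} = (3/2)(k+1)·X·Q_k − (1/2)(X²−1)·Q_k′ − (1/2)∑_{j=1}^{k−1} Q_j·Q_{k−j}`. -/
noncomputable def QHer : ℕ → Polynomial ℚ
  | 0 => 0
  | 1 => C (-(1 : ℚ) / 8) * (3 * X ^ 2 + 2)
  | (k + 2) =>
      C (((3 : ℚ) / 2) * ((k : ℚ) + 2)) * X * QHer (k + 1)
        - C ((1 : ℚ) / 2) * (X ^ 2 - 1) * derivative (QHer (k + 1))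
        - C ((1 : ℚ) / 2) *
            ∑ j ∈ (Finset.Ico 1 (k + 1)).attach, QHer j.1 * QHer (k + 1 - j.1)
  decreasing_by
    all_goals try (have hj := Finset.mem_Ico.mp j.2)
    all_goals omega

noncomputable def LL (c : ℚ) (P : ℚ[X]) : ℚ[X] := (X ^ 2 - 1) * derivative P - C c * X * P

lemma LL_add (c : ℚ) (P Q : ℚ[X]) : LL c (P + Q) = LL c P + LL c Q := by
  simp only [LL, derivative_add]; ring

lemma LL_sub (c : ℚ) (P Q : ℚ[X]) : LL c (P - Q) = LL c P - LL c Q := by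
  simp only [LL, derivative_sub]; ring

lemma LL_zero (c : ℚ) : LL c 0 = 0 := by simp [LL]

lemma LL_C_mul (c a : ℚ) (P : ℚ[X]) : LL c (C a * P) = C a * LL c P := by
  simp only [LL, derivative_C_mul]; ring

lemma LL_sum {ι : Type*} (c : ℚ) (s : Finset ι) (f : ι → ℚ[X]) :
    LL c (∑ i ∈ s, f i) = ∑ i ∈ s, LL c (f i) := by
  classical
  induction s using Finset.induction_on with
  | empty => simp [LL_zero]
  | insert a s ha ih => rw [Finset.sum_insert ha, Finset.sum_insert ha, LL_add, ih]

lemma LL_V_mul (c : ℚ) (P : ℚ[X]) :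
    LL (c + 2) ((X ^ 2 - 1) * P) = (X ^ 2 - 1) * LL c P := by
  simp only [LL, derivative_mul, derivative_sub, derivative_X_pow, derivative_one, map_add]
  simp; ring

lemma LL_Vpow_mul (c : ℚ) (l : ℕ) (P : ℚ[X]) :
    LL (c + 2 * l) ((X ^ 2 - 1) ^ l * P) = (X ^ 2 - 1) ^ l * LL c P := by
  induction l with
  | zero => simp
  | succ l ih =>
    have : c + 2 * ((l + 1 : ℕ) : ℚ) = (c + 2 * l) + 2 := by push_cast; ring
    rw [this, pow_succ', mul_assoc, LL_V_mul, ih, mul_assoc]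

lemma LL_X_pow_succ (c : ℚ) (m : ℕ) :
    LL c (X ^ (m + 1)) = C ((m : ℚ) + 1 - c) * X ^ (m + 2) - C ((m : ℚ) + 1) * X ^ m := by
  simp only [LL, derivative_X_pow, map_sub, map_add]
  simp; ring

lemma coeff_LL_zero (c : ℚ) (P : ℚ[X]) : (LL c P).coeff 0 = -P.coeff 1 := by
  simp [LL, sub_mul, mul_assoc, coeff_derivative, pow_two]

lemma coeff_LL_succ (c : ℚ) (P : ℚ[X]) (n : ℕ) :
    (LL c P).coeff (n + 1) = (n - c) * P.coeff n - (n + 2) * P.coeff (n + 2) := by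
  rw [LL, sub_mul, mul_assoc, coeff_sub, coeff_sub, coeff_C_mul, coeff_X_mul, one_mul,
    coeff_derivative, pow_two, mul_assoc, coeff_X_mul]
  rcases n with _ | n
  · simp; ring
  · rw [coeff_X_mul, coeff_derivative]; push_cast; ring

lemma LL_inj_lt (c : ℕ) (P : ℚ[X]) (h : LL c P = 0) (hd : P.natDegree < c) : P = 0 := by
  by_contra hP
  have h1 := coeff_LL_succ c P P.natDegree
  rw [h, coeff_eq_zero_of_natDegree_lt (n := P.natDegree + 2) (by omega)] at h1
  simp only [coeff_zero, mul_zero, sub_zero, coeff_natDegree] at h1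
  rcases mul_eq_zero.mp h1.symm with h2 | h2
  · have : (P.natDegree : ℚ) < c := by exact_mod_cast hd
    linarith
  · exact hP (leadingCoeff_eq_zero.mp h2)

lemma LL_inj_odd (q : ℕ) (P : ℚ[X]) (h : LL ((2 * q + 1 : ℕ) : ℚ) P = 0) : P = 0 := by
  by_contra hP
  have h1 := coeff_LL_succ ((2 * q + 1 : ℕ) : ℚ) P P.natDegree
  rw [h, coeff_eq_zero_of_natDegree_lt (n := P.natDegree + 2) (by omega)] at h1
  simp only [coeff_zero, mul_zero, sub_zero, coeff_natDegree] at h1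
  rcases mul_eq_zero.mp h1.symm with h2 | h2
  · have h3 : P.natDegree = 2 * q + 1 := by
      have : (P.natDegree : ℚ) = (2 * q + 1 : ℕ) := by linarith
      exact_mod_cast this
    have h4 : ∀ i, P.coeff (2 * i + 1) = 0 := by
      intro i
      induction i with
      | zero =>
        have := coeff_LL_zero ((2 * q + 1 : ℕ) : ℚ) P
        rw [h] at this; simpa using this.symm
      | succ i ih =>
        have := coeff_LL_succ ((2 * q + 1 : ℕ) : ℚ) P (2 * i + 1)
        rw [h, ih] at this
        simp only [coeff_zero, mul_zero, zero_sub] at this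
        have h5 : (((2 * i + 1 : ℕ) : ℚ) + 2) ≠ 0 := by positivity
        have h6 : (((2 * i + 1 : ℕ) : ℚ) + 2) * P.coeff (2 * i + 1 + 2) = 0 := by linarith
        exact (mul_eq_zero.mp h6).resolve_left h5
    have h7 := h4 q
    rw [← h3, coeff_natDegree] at h7
    exact hP (leadingCoeff_eq_zero.mp h7)
  · exact hP (leadingCoeff_eq_zero.mp h2)

/-- degree at most `n` and same parity as `n` -/
def Gr (n : ℕ) (P : ℚ[X]) : Prop := ∀ m, P.coeff m ≠ 0 → m ≤ n ∧ m % 2 = n % 2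

lemma Gr.zero (n : ℕ) : Gr n 0 := by intro m hm; simp at hm

lemma Gr.add {n : ℕ} {P Q : ℚ[X]} (hP : Gr n P) (hQ : Gr n Q) : Gr n (P + Q) := by
  intro m hm
  by_cases h : P.coeff m = 0
  · apply hQ; intro h'; apply hm; simp [h, h']
  · exact hP m h

lemma Gr.neg {n : ℕ} {P : ℚ[X]} (hP : Gr n P) : Gr n (-P) := by
  intro m hm; apply hP; intro h; apply hm; simp [h]

lemma Gr.sub {n : ℕ} {P Q : ℚ[X]} (hP : Gr n P) (hQ : Gr n Q) : Gr n (P - Q) := by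
  rw [sub_eq_add_neg]; exact hP.add hQ.neg

lemma Gr.mul {n m : ℕ} {P Q : ℚ[X]} (hP : Gr n P) (hQ : Gr m Q) : Gr (n + m) (P * Q) := by
  intro i hi
  rw [coeff_mul] at hi
  obtain ⟨⟨a, b⟩, hab, h⟩ := Finset.exists_ne_zero_of_sum_ne_zero hi
  rw [Finset.HasAntidiagonal.mem_antidiagonal] at hab
  have h1 := hP a (left_ne_zero_of_mul h)
  have h2 := hQ b (right_ne_zero_of_mul h)
  simp only at hab
  omega

lemma Gr.C (a : ℚ) : Gr 0 (C a) := by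
  intro m hm
  rw [coeff_C] at hm
  split_ifs at hm with h
  · subst h; simp
  · exact absurd rfl hm

lemma Gr.X_pow (n : ℕ) : Gr n (X ^ n) := by
  intro m hm
  rw [coeff_X_pow] at hm
  split_ifs at hm with h
  · subst h; simp
  · exact absurd rfl hm

lemma Gr.X : Gr 1 (X : ℚ[X]) := by simpa using Gr.X_pow 1

lemma Gr.C_mul {n : ℕ} {P : ℚ[X]} (a : ℚ) (hP : Gr n P) : Gr n (Polynomial.C a * P) := by
  simpa using (Gr.C a).mul hP

lemma Gr.mono {n m : ℕ} {P : ℚ[X]} (hP : Gr n P) (h : n ≤ m) (h2 : n % 2 = m % 2) : Gr m P := by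
  intro i hi; have := hP i hi; omega

lemma Gr.one : Gr 0 (1 : ℚ[X]) := by simpa using Gr.C 1

lemma Gr.V : Gr 2 (Polynomial.X ^ 2 - 1 : ℚ[X]) :=
  (Gr.X_pow 2).sub (Gr.one.mono (by norm_num) (by norm_num))

lemma Gr.sum {ι : Type*} {n : ℕ} (s : Finset ι) (f : ι → ℚ[X]) (h : ∀ i ∈ s, Gr n (f i)) :
    Gr n (∑ i ∈ s, f i) := by
  intro m hm
  rw [finsetSum_coeff] at hm
  obtain ⟨i, hi, h'⟩ := Finset.exists_ne_zero_of_sum_ne_zero hm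
  exact h i hi m h'

lemma Gr.LL {n : ℕ} {P : ℚ[X]} (c : ℚ) (hP : Gr n P) : Gr (n + 1) (LL c P) := by
  intro m hm
  rcases m with _ | m
  · rw [coeff_LL_zero] at hm
    have := hP 1 (by intro h; apply hm; simp [h])
    omega
  · rw [coeff_LL_succ] at hm
    by_cases h : P.coeff m = 0
    · have := hP (m + 2) (by intro h'; apply hm; simp [h, h'])
      omega
    · have := hP m h; omega

lemma Gr.natDegree_le {n : ℕ} {P : ℚ[X]} (hP : Gr n P) : P.natDegree ≤ n := by
  by_cases h : P = 0
  · simp [h]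
  · exact (hP _ (by rwa [coeff_natDegree, Ne, leadingCoeff_eq_zero])).1

lemma coeff_comp_negX (P : ℚ[X]) (m : ℕ) :
    (P.comp (-Polynomial.X)).coeff m = (-1) ^ m * P.coeff m := by
  induction P using Polynomial.induction_on' with
  | add p q hp hq => simp [hp, hq, mul_add]
  | monomial n a =>
    rw [monomial_comp, neg_pow, ← mul_assoc, ← C_1, ← C_neg, ← C_pow, ← C_mul, coeff_C_mul,
      coeff_X_pow, coeff_monomial]
    by_cases h : m = n
    · subst h; simp [mul_comm]
    · simp [h, Ne.symm h]

lemma Gr.comp_even {n : ℕ} {P : ℚ[X]} (hP : Gr (2 * n) P) : P.comp (-Polynomial.X) = P := by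
  ext m
  rw [coeff_comp_negX]
  by_cases h : P.coeff m = 0
  · simp [h]
  · have := hP m h
    have : Even m := Nat.even_iff.mpr (by omega)
    simp [this.neg_one_pow]

lemma Gr.comp_odd {n : ℕ} {P : ℚ[X]} (hP : Gr (2 * n + 1) P) : P.comp (-Polynomial.X) = -P := by
  ext m
  rw [coeff_comp_negX]
  by_cases h : P.coeff m = 0
  · simp [h]
  · have := hP m h
    have : Odd m := Nat.odd_iff.mpr (by omega)
    simp [this.neg_one_pow]

/-- rising factorial of one half -/
def hp : ℕ → ℚ
  | 0 => 1
  | n + 1 => hp n * (n + 1 / 2)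

lemma hp_pos (n : ℕ) : 0 < hp n := by
  induction n with
  | zero => simp [hp]
  | succ n ih => rw [hp]; positivity

lemma exists_odd_mono' (q : ℕ) (d : ℕ) : ∀ j : ℕ, j + d = q → ∃ P : ℚ[X], Gr (2 * q + 1) P ∧
    LL ((2 * q + 1 : ℕ) : ℚ) P = X ^ (2 * j) ∧
    P.coeff (2 * q + 1) = (-1) ^ (d + 1) * d.factorial * hp j / (2 * hp (q + 1)) := by
  induction d with
  | zero =>
    intro j hj
    have hj : j = q := by omega
    subst hj
    refine ⟨C (-1 / (2 * j + 1 : ℚ)) * X ^ (2 * j + 1), (Gr.X_pow _).C_mul _, ?_, ?_⟩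
    · rw [LL_C_mul, LL_X_pow_succ]
      have : ((2 * j : ℕ) : ℚ) + 1 - ((2 * j + 1 : ℕ) : ℚ) = 0 := by push_cast; ring
      rw [this, C_0, zero_mul, zero_sub, mul_neg, ← mul_assoc, ← C_mul, ← neg_mul, ← C_neg]
      have h : (2 * (j : ℚ) + 1) ≠ 0 := by positivity
      have : -(-1 / (2 * j + 1 : ℚ) * (((2 * j : ℕ) : ℚ) + 1)) = 1 := by push_cast; field_simp
      rw [this]; simp
    · rw [coeff_C_mul, coeff_X_pow, if_pos rfl, hp]
      have := hp_pos j
      have h : (2 * (j : ℚ) + 1) ≠ 0 := by positivity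
      simp; field_simp
  | succ d ih =>
    intro j hj
    obtain ⟨P, h1, h2, h3⟩ := ih (j + 1) (by omega)
    have hne : (2 * (j : ℚ) + 1) ≠ 0 := by positivity
    refine ⟨C (-1 / (2 * j + 1 : ℚ)) * X ^ (2 * j + 1) +
      C ((2 * j - 2 * q : ℚ) / (2 * j + 1)) * P, ?_, ?_, ?_⟩
    · exact (((Gr.X_pow _).mono (by omega) (by omega)).C_mul _).add (h1.C_mul _)
    · rw [LL_add, LL_C_mul, LL_C_mul, LL_X_pow_succ, h2, mul_sub, ← mul_assoc, ← mul_assoc,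
        ← C_mul, ← C_mul]
      have e1 : (-1 / (2 * j + 1 : ℚ) * (((2 * j : ℕ) : ℚ) + 1)) = -1 := by push_cast; field_simp
      have e2 : -1 / (2 * j + 1 : ℚ) * (((2 * j : ℕ) : ℚ) + 1 - ((2 * q + 1 : ℕ) : ℚ))
        = -((2 * j - 2 * q : ℚ) / (2 * j + 1)) := by push_cast; ring
      rw [e1, e2]
      simp only [C_neg, C_1]
      ring
    · rw [coeff_add, coeff_C_mul, coeff_C_mul, coeff_X_pow, if_neg (by omega), h3, hp,
        Nat.factorial_succ]
      have := hp_pos (q + 1)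
      have hq : (q : ℚ) = j + d + 1 := by rw [← hj]; push_cast; ring
      rw [hq]
      push_cast
      field_simp
      ring

lemma exists_odd_gen (q : ℕ) (Q : ℚ[X]) (hQ : Gr (2 * q) Q) :
    ∃ P : ℚ[X], Gr (2 * q + 1) P ∧ LL ((2 * q + 1 : ℕ) : ℚ) P = Q := by
  have key : ∀ i, ∃ P : ℚ[X], Gr (2 * q + 1) P ∧
      LL ((2 * q + 1 : ℕ) : ℚ) P = C (Q.coeff i) * X ^ i := by
    intro i
    by_cases h : Q.coeff i = 0
    · exact ⟨0, Gr.zero _, by simp [h, LL_zero]⟩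
    · have := hQ i h
      obtain ⟨j, rfl⟩ : ∃ j, i = 2 * j := ⟨i / 2, by omega⟩
      obtain ⟨P, h1, h2, -⟩ := exists_odd_mono' q (q - j) j (by omega)
      exact ⟨C (Q.coeff (2 * j)) * P, h1.C_mul _, by rw [LL_C_mul, h2]⟩
  choose f hf1 hf2 using key
  refine ⟨∑ i ∈ Q.support, f i, Gr.sum _ _ fun i _ => hf1 i, ?_⟩
  rw [LL_sum, Finset.sum_congr rfl fun i _ => hf2 i]
  exact (as_sum_support_C_mul_X_pow Q).symm

lemma exists_even_mono (c : ℕ) (j : ℕ) (hj : 2 * j < c) : ∃ P : ℚ[X], Gr (2 * j) P ∧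
    LL (c : ℚ) P = X ^ (2 * j + 1) := by
  induction j with
  | zero =>
    refine ⟨C (-1 / (c : ℚ)), Gr.C _, ?_⟩
    have : (c : ℚ) ≠ 0 := by norm_cast; omega
    have h : C (c : ℚ) * C (-1 / (c : ℚ)) = -1 := by
      rw [← C_mul, mul_div_cancel₀ _ this]; simp
    simp only [LL, derivative_C]
    linear_combination (-X) * h
  | succ j ih =>
    obtain ⟨P, h1, h2⟩ := ih (by omega)
    have hne : ((2 * j + 2 : ℕ) : ℚ) - c ≠ 0 := by
      intro h
      have : ((2 * j + 2 : ℕ) : ℚ) = c := by linarith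
      have : 2 * j + 2 = c := by exact_mod_cast this
      omega
    refine ⟨C (1 / (((2 * j + 2 : ℕ) : ℚ) - c)) * (X ^ (2 * j + 1 + 1) + C ((2 * j + 2 : ℕ) : ℚ) * P),
      (((Gr.X_pow _).mono (by omega) (by omega)).add
        ((h1.mono (by omega) (by omega)).C_mul _)).C_mul _, ?_⟩
    rw [LL_C_mul, LL_add, LL_C_mul, h2, LL_X_pow_succ]
    have e1 : ((2 * j + 1 : ℕ) : ℚ) + 1 = ((2 * j + 2 : ℕ) : ℚ) := by push_cast; ring
    rw [e1, sub_add_cancel, ← mul_assoc, ← C_mul, one_div_mul_cancel hne]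
    simp; ring

lemma exists_even_gen (c q : ℕ) (hq : 2 * q < c) (Q : ℚ[X]) (hQ : Gr (2 * q + 1) Q) :
    ∃ P : ℚ[X], Gr (2 * q) P ∧ LL (c : ℚ) P = Q := by
  have key : ∀ i, ∃ P : ℚ[X], Gr (2 * q) P ∧ LL (c : ℚ) P = C (Q.coeff i) * X ^ i := by
    intro i
    by_cases h : Q.coeff i = 0
    · exact ⟨0, Gr.zero _, by simp [h, LL_zero]⟩
    · have := hQ i h
      obtain ⟨j, rfl⟩ : ∃ j, i = 2 * j + 1 := ⟨i / 2, by omega⟩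
      obtain ⟨P, h1, h2⟩ := exists_even_mono c j (by omega)
      exact ⟨C (Q.coeff (2 * j + 1)) * P, (h1.mono (by omega) (by omega)).C_mul _,
        by rw [LL_C_mul, h2]⟩
  choose f hf1 hf2 using key
  refine ⟨∑ i ∈ Q.support, f i, Gr.sum _ _ fun i _ => hf1 i, ?_⟩
  rw [LL_sum, Finset.sum_congr rfl fun i _ => hf2 i]
  exact (as_sum_support_C_mul_X_pow Q).symm

noncomputable def bS : PowerSeries ℚ := PowerSeries.mk fun n => hp n / n.factorial

lemma bS_ode : (1 - PowerSeries.X) * PowerSeries.derivative ℚ bS = PowerSeries.C (1 / 2) * bS := by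
  have key : ∀ n : ℕ, hp (n + 1) / ((n + 1).factorial : ℚ) * (n + 1) =
      hp n / n.factorial * (n + 1 / 2) := by
    intro n
    rw [hp, Nat.factorial_succ]
    have : (n.factorial : ℚ) ≠ 0 := by positivity
    push_cast; field_simp
  ext n
  rw [sub_mul, one_mul, map_sub, PowerSeries.coeff_C_mul]
  rcases n with _ | n
  · rw [PowerSeries.coeff_zero_X_mul, PowerSeries.coeff_derivative]
    simp [bS, hp]
  · rw [PowerSeries.coeff_succ_X_mul, PowerSeries.coeff_derivative, PowerSeries.coeff_derivative]
    simp only [bS, PowerSeries.coeff_mk]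
    rw [key (n + 1)]
    push_cast
    ring

lemma bS_sq : bS ^ 2 * (1 - PowerSeries.X) = 1 := by
  apply PowerSeries.derivative.ext
  · have h := bS_ode
    rw [Derivation.leibniz, PowerSeries.derivative_pow]
    simp only [map_sub, PowerSeries.derivative_one, PowerSeries.derivative_X, smul_eq_mul]
    have h2 : (2 : PowerSeries ℚ) * PowerSeries.C (1 / 2) = 1 := by
      rw [← map_ofNat (PowerSeries.C (R := ℚ)), ← map_mul]; norm_num
    push_cast
    simp only [pow_one]
    linear_combination 2 * bS * h + bS ^ 2 * h2
  · simp [bS, hp]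

lemma exists_tanh : ∃ w s : PowerSeries ℚ,
    PowerSeries.X * PowerSeries.derivative ℚ w = 1 - PowerSeries.X ^ 2 * w ^ 2 - w ∧
    PowerSeries.derivative ℚ s = - (PowerSeries.X * w) * s ∧
    PowerSeries.constantCoeff w = 1 ∧ PowerSeries.constantCoeff s = 1 ∧
    s ^ 2 = 1 - PowerSeries.X ^ 2 * w ^ 2 ∧
    PowerSeries.X * w * (PowerSeries.exp ℚ ^ 2 + 1) = PowerSeries.exp ℚ ^ 2 - 1 ∧
    s * (PowerSeries.exp ℚ ^ 2 + 1) = 2 * PowerSeries.exp ℚ := by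
  set E := PowerSeries.exp ℚ with hE
  have hdE : PowerSeries.derivative ℚ E = E := PowerSeries.derivative_exp ℚ
  have hE0 : PowerSeries.constantCoeff E = 1 := PowerSeries.constantCoeff_exp
  set I := (E ^ 2 + 1)⁻¹ with hI
  have hc : PowerSeries.constantCoeff (E ^ 2 + 1) ≠ 0 := by simp [hE0]
  have hEI : (E ^ 2 + 1) * I = 1 := PowerSeries.mul_inv_cancel _ hc
  have hT0 : PowerSeries.constantCoeff ((E ^ 2 - 1) * I) = 0 := by simp [hE0]
  obtain ⟨w, hw⟩ := PowerSeries.X_dvd_iff.mpr hT0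
  have hdI : PowerSeries.derivative ℚ I = -2 * E ^ 2 * I ^ 2 := by
    rw [hI, PowerSeries.derivative_inv', map_add, PowerSeries.derivative_one,
      PowerSeries.derivative_pow, hdE]
    push_cast; simp only [pow_one]; ring
  have hT : PowerSeries.X * PowerSeries.derivative ℚ w + w = 1 - PowerSeries.X ^ 2 * w ^ 2 := by
    have h1 : PowerSeries.derivative ℚ ((E ^ 2 - 1) * I) =
        PowerSeries.derivative ℚ (PowerSeries.X * w) := by rw [hw]
    rw [Derivation.leibniz, Derivation.leibniz, map_sub, PowerSeries.derivative_one,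
      PowerSeries.derivative_pow, hdE, hdI, PowerSeries.derivative_X] at h1
    simp only [smul_eq_mul] at h1
    push_cast at h1
    simp only [pow_one] at h1
    have h2 : PowerSeries.X ^ 2 * w ^ 2 = ((E ^ 2 - 1) * I) ^ 2 := by rw [hw]; ring
    rw [h2]
    linear_combination (-1 : PowerSeries ℚ) * h1 + (1 - E ^ 2 * I + I) * hEI
  have hs2 : (2 * E * I) ^ 2 = 1 - PowerSeries.X ^ 2 * w ^ 2 := by
    have h2 : PowerSeries.X ^ 2 * w ^ 2 = ((E ^ 2 - 1) * I) ^ 2 := by rw [hw]; ring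
    rw [h2]; linear_combination (1 + (E^2+1) * I) * hEI
  refine ⟨w, 2 * E * I, ?_, ?_, ?_, ?_, hs2, ?_, ?_⟩
  · linear_combination hT
  · rw [← hw, mul_assoc, Derivation.leibniz, Derivation.leibniz, hdE, hdI]
    have : PowerSeries.derivative ℚ (2 : PowerSeries ℚ) = 0 := by
      exact_mod_cast Derivation.map_natCast (PowerSeries.derivative ℚ) 2
    rw [this]
    simp only [smul_eq_mul]
    linear_combination (-2 * E * I) * hEI
  · have := congrArg PowerSeries.constantCoeff hT
    simpa using this
  · have := congrArg PowerSeries.constantCoeff hEI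
    have h4 : (PowerSeries.C (2 : ℚ)) = 2 := map_ofNat _ 2
    rw [← h4]
    simp [hE0] at this ⊢
    linarith
  · rw [← hw]; linear_combination (E ^ 2 - 1) * hEI
  · linear_combination 2 * E * hEI

lemma csch_bernoulli (Y : PowerSeries ℚ)
    (h : Y * (PowerSeries.exp ℚ ^ 2 - 1) = 2 * PowerSeries.X * PowerSeries.exp ℚ) (n : ℕ) :
    PowerSeries.coeff n Y = (2 - 2 ^ n) * _root_.bernoulli n / n.factorial := by
  set E := PowerSeries.exp ℚ with hE
  have h1 := bernoulliPowerSeries_mul_exp_sub_one ℚ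
  have h2 := congrArg (PowerSeries.rescale (2 : ℚ)) h1
  have h3 : PowerSeries.rescale (2 : ℚ) E = E ^ 2 := by
    have := PowerSeries.exp_pow_eq_rescale_exp (A := ℚ) 2
    rw [hE, this]; norm_num
  rw [map_mul, map_sub, map_one, ← hE, h3, PowerSeries.rescale_X] at h2
  have h4 : (PowerSeries.C (2 : ℚ)) = 2 := map_ofNat _ 2
  rw [h4] at h2
  rw [← hE] at h1
  have hne : E ^ 2 - 1 ≠ 0 := by
    intro h0
    rw [h0, mul_zero] at h2
    have := congrArg (PowerSeries.coeff 1) h2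
    rw [← h4, PowerSeries.coeff_C_mul] at this
    simp at this
  have h5 : Y = 2 * bernoulliPowerSeries ℚ - PowerSeries.rescale (2 : ℚ) (bernoulliPowerSeries ℚ) := by
    apply mul_right_cancel₀ hne
    rw [h]
    linear_combination (-2 * (E + 1)) * h1 + h2
  rw [h5, map_sub, ← h4, PowerSeries.coeff_C_mul, PowerSeries.coeff_rescale]
  simp [bernoulliPowerSeries]
  ring

lemma exists_a : ∃ a : ℕ → ℕ → ℚ, a 0 0 = 1 ∧ (∀ N j, N < j → a N j = 0) ∧
    (∀ N i : ℕ, (2 * (N : ℚ) + 2 + (i : ℚ)) * a (N + 1) i - (2 * (N : ℚ) + 2 + (i : ℚ) + 1 / 2) * a (N + 1) (i + 1) =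
      -(3 / 2) * (a N i - 2 * a N (i + 1) + a N (i + 2)) +
      (i : ℚ) * (a N (i - 1) - 3 * a N i + 3 * a N (i + 1) - a N (i + 2))) ∧
    (∀ k, ∑ j ∈ Finset.range (k + 1), hp j / j.factorial * a k j =
      (2 - 2 ^ (2 * k)) * _root_.bernoulli (2 * k) / (2 * k).factorial) := by
  obtain ⟨w, s, hw, hs, hw0, hs0, hs2, hT, hsE⟩ := exists_tanh
  set t := (PowerSeries.X : PowerSeries ℚ) with ht
  set d := PowerSeries.derivative ℚ with hd
  set W := 1 - w with hW
  have hW0 : PowerSeries.constantCoeff W = 0 := by simp [hW, hw0]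
  have hWs : PowerSeries.HasSubst W := PowerSeries.HasSubst.of_constantCoeff_zero' hW0
  have hdW : t * d W = t ^ 2 * w ^ 2 - W := by
    rw [hW, map_sub, hd, PowerSeries.derivative_one, zero_sub, mul_neg, hw]; ring
  have hW1 : PowerSeries.coeff 1 W = 0 := by
    clear_value W
    have h := congrArg (PowerSeries.coeff 1) hdW
    have h1 : PowerSeries.coeff 1 (t ^ 2 * w ^ 2) = 0 := by
      rw [ht, PowerSeries.coeff_X_pow_mul', if_neg (by norm_num)]
    rw [map_sub, h1, ht, PowerSeries.coeff_succ_X_mul, hd, PowerSeries.coeff_derivative] at h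
    simp only [zero_add, Nat.cast_zero, mul_one, zero_sub] at h
    linarith
  have hWd : t ^ 2 ∣ W := by
    rw [ht, PowerSeries.X_pow_dvd_iff]
    intro m hm
    interval_cases m
    · simpa using hW0
    · exact hW1
  set β := PowerSeries.subst W bS with hβ
  have hβ2 : β ^ 2 * w = 1 := by
    have := congrArg (PowerSeries.substAlgHom hWs) bS_sq
    rw [map_mul, map_pow, map_sub, map_one, PowerSeries.substAlgHom_X, PowerSeries.coe_substAlgHom,
      ← hβ, hW] at this
    rw [← this]; ring
  have hβne : β ≠ 0 := by
    intro h; rw [h] at hβ2; simp at hβ2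
  -- derivative of β
  have hdβ : 2 * w * (t * d β) = (t ^ 2 * w ^ 2 - W) * β := by
    have h1 := congrArg d hβ2
    rw [Derivation.leibniz, hd, PowerSeries.derivative_pow, PowerSeries.derivative_one] at h1
    simp only [smul_eq_mul] at h1
    push_cast at h1
    simp only [pow_one] at h1
    rw [← hd] at h1
    apply mul_left_cancel₀ hβne
    linear_combination t * h1 - β ^ 2 * hw
  have hdec : ∀ K : ℕ, ∃ g : PowerSeries ℚ, β =
      ∑ j ∈ Finset.range K, PowerSeries.C (hp j / j.factorial) * W ^ j + W ^ K * g := by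
    intro K
    refine ⟨PowerSeries.subst W (PowerSeries.mk fun n => hp (n + K) / (n + K).factorial), ?_⟩
    induction K with
    | zero => simp [hβ, bS]
    | succ K ih =>
      have e : (PowerSeries.mk fun n => hp (n + K) / ((n + K).factorial : ℚ)) =
          PowerSeries.C (hp K / K.factorial) + PowerSeries.X *
          (PowerSeries.mk fun n => hp (n + (K + 1)) / ((n + (K + 1)).factorial : ℚ)) := by
        ext n
        rcases n with _ | n
        · simp
        · rw [map_add, PowerSeries.coeff_succ_X_mul, PowerSeries.coeff_C]
          simp [add_assoc, add_comm 1 K]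
      rw [e, PowerSeries.subst_add hWs, PowerSeries.subst_mul hWs, PowerSeries.subst_X hWs,
        PowerSeries.subst_C] at ih
      rw [ih, Finset.sum_range_succ]
      change _ + W ^ K * (PowerSeries.C _ + _) = _
      ring
  have hvan : ∀ (F : PowerSeries ℚ) (N j : ℕ), N < j → PowerSeries.coeff (2 * N) (F * W ^ j) = 0 := by
    intro F N j hNj
    obtain ⟨g, hg⟩ := hWd
    rw [hg, mul_pow, ← pow_mul, mul_left_comm, ht, PowerSeries.coeff_X_pow_mul']
    rw [if_neg (by omega)]
  have hβ0 : PowerSeries.constantCoeff β = 1 := by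
    obtain ⟨g, hg⟩ := hdec 1
    rw [hg]; simp [hW0, hp]
  refine ⟨fun N j => PowerSeries.coeff (2 * N) (s * β * W ^ j), ?_, ?_, ?_, ?_⟩
  · simp [hs0, hβ0]
  · intro N j h; exact hvan _ N j h
  · intro N i
    have key : t * d (s * β * W ^ i - s * β * W ^ (i + 1)) =
        PowerSeries.C (1 / 2) * (s * β * W ^ (i + 1)) -
        PowerSeries.C (3 / 2) * (t ^ 2 * (s * β * W ^ i - 2 * (s * β * W ^ (i + 1)) + s * β * W ^ (i + 2)))
        + PowerSeries.C (i : ℚ) * (t ^ 2 * (s * β * W ^ (i - 1) - 3 * (s * β * W ^ i) +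
          3 * (s * β * W ^ (i + 1)) - s * β * W ^ (i + 2)))
        - PowerSeries.C (i : ℚ) * (s * β * W ^ i - s * β * W ^ (i + 1)) := by
      have e1 : s * β * W ^ i - s * β * W ^ (i + 1) = s * (w * (β * W ^ i)) := by rw [hW]; ring
      have h2 : (2 : PowerSeries ℚ) * PowerSeries.C (1 / 2) = 1 := by
        rw [← map_ofNat (PowerSeries.C (R := ℚ)), ← map_mul]; norm_num
      have h3 : PowerSeries.C (3 / 2) = (3 : PowerSeries ℚ) * PowerSeries.C (1 / 2) := by
        rw [← map_ofNat (PowerSeries.C (R := ℚ)), ← map_mul]; norm_num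
      have hq : PowerSeries.C (i : ℚ) * W ^ i = PowerSeries.C (i : ℚ) * W * W ^ (i - 1) := by
        rcases i with _ | i
        · simp
        · simp only [Nat.add_one_sub_one]; ring
      have hdi : d (W ^ i) = PowerSeries.C (i : ℚ) * W ^ (i - 1) * d W := by
        rw [hd, PowerSeries.derivative_pow, map_natCast]
      rw [e1, Derivation.leibniz, Derivation.leibniz, Derivation.leibniz, hdi, h3]
      simp only [smul_eq_mul]
      have hw' : w = 1 - W := by rw [hW]; ring
      generalize PowerSeries.C (1 / 2 : ℚ) = h at *
      generalize PowerSeries.C (i : ℚ) = c at *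
      generalize W ^ (i - 1) = q at *
      rw [pow_add W i 1, pow_add W i 2]
      generalize W ^ i = p at *
      generalize d W = dW at *
      generalize d w = dw at *
      generalize d β = dβ at *
      generalize d s = ds at *
      clear_value W
      subst hw'
      linear_combination (t * (1 - W) * β * p) * hs + s * β * p * hw + h * s * p * hdβ
        + s * (1 - W) * β * c * q * hdW
        + s * p * (β * (2 * t ^ 2 * (1 - W) ^ 2 - W) - (1 - W) * t * dβ) * h2
        + s * β * ((1 - W) + t ^ 2 * (3 - 3 * W + W ^ 2)) * hq
    have h2 := congrArg (PowerSeries.coeff (2 * N + 2)) key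
    have e2 : (2 : PowerSeries ℚ) = PowerSeries.C 2 := (map_ofNat _ 2).symm
    have e3 : (3 : PowerSeries ℚ) = PowerSeries.C 3 := (map_ofNat _ 3).symm
    rw [e2, e3, ht, show 2 * N + 2 = (2 * N + 1) + 1 from rfl, PowerSeries.coeff_succ_X_mul, hd,
      PowerSeries.coeff_derivative] at h2
    simp only [map_add, map_sub, PowerSeries.coeff_C_mul] at h2
    rw [show 2 * N + 1 + 1 = 2 * N + 2 from rfl] at h2
    simp only [PowerSeries.coeff_X_pow_mul, map_add, map_sub, PowerSeries.coeff_C_mul] at h2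
    simp only [show 2 * (N + 1) = 2 * N + 2 from rfl]
    push_cast at h2
    linear_combination h2
  · intro k
    have hY : (s * β * β) * (PowerSeries.exp ℚ ^ 2 - 1) = 2 * PowerSeries.X * PowerSeries.exp ℚ := by
      rw [← hT]
      linear_combination (s * t * (PowerSeries.exp ℚ ^ 2 + 1)) * hβ2 + t * hsE
    rw [← csch_bernoulli _ hY]
    obtain ⟨g, hg⟩ := hdec (k + 1)
    have : s * β * β = ∑ j ∈ Finset.range (k + 1), PowerSeries.C (hp j / j.factorial) * (s * β * W ^ j)
        + (s * β * g) * W ^ (k + 1) := by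
      nth_rewrite 2 [hg]
      rw [mul_add, Finset.mul_sum]
      congr 1
      · apply Finset.sum_congr rfl; intros; ring
      · ring
    rw [this, map_add, hvan _ _ _ (Nat.lt_succ_self k), map_sum, add_zero]
    apply Finset.sum_congr rfl; intros; rw [PowerSeries.coeff_C_mul]

/-! ### The differential ring of power series over polynomials -/

noncomputable def dl (F : PowerSeries ℚ[X]) : PowerSeries ℚ[X] :=
  PowerSeries.mk fun n => LL (3 * n) (PowerSeries.coeff n F)

noncomputable def th (F : PowerSeries ℚ[X]) : PowerSeries ℚ[X] :=
  PowerSeries.mk fun n => C (n : ℚ) * PowerSeries.coeff n F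

lemma coeff_dl (F : PowerSeries ℚ[X]) (n : ℕ) :
    PowerSeries.coeff n (dl F) = LL (3 * n) (PowerSeries.coeff n F) := by simp [dl]

lemma coeff_th (F : PowerSeries ℚ[X]) (n : ℕ) :
    PowerSeries.coeff n (th F) = C (n : ℚ) * PowerSeries.coeff n F := by simp [th]

lemma dl_add (F G : PowerSeries ℚ[X]) : dl (F + G) = dl F + dl G := by
  ext1 n; simp [coeff_dl, LL_add]

lemma dl_sub (F G : PowerSeries ℚ[X]) : dl (F - G) = dl F - dl G := by
  ext1 n; simp [coeff_dl, LL_sub]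

lemma th_add (F G : PowerSeries ℚ[X]) : th (F + G) = th F + th G := by
  ext1 n; simp [coeff_th, mul_add]

lemma th_sub (F G : PowerSeries ℚ[X]) : th (F - G) = th F - th G := by
  ext1 n; simp [coeff_th, mul_sub]

lemma LL_mul_add (c d : ℚ) (P Q : ℚ[X]) : LL (c + d) (P * Q) = LL c P * Q + P * LL d Q := by
  simp only [LL, derivative_mul, C_add]; ring

lemma dl_mul (F G : PowerSeries ℚ[X]) : dl (F * G) = dl F * G + F * dl G := by
  ext1 n
  rw [coeff_dl, map_add, PowerSeries.coeff_mul, PowerSeries.coeff_mul, PowerSeries.coeff_mul, LL_sum,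
    ← Finset.sum_add_distrib]
  apply Finset.sum_congr rfl
  rintro ⟨i, j⟩ hij
  rw [Finset.HasAntidiagonal.mem_antidiagonal] at hij
  simp only at hij ⊢
  rw [coeff_dl, coeff_dl, ← LL_mul_add, ← hij]
  push_cast; rw [mul_add]

lemma th_mul (F G : PowerSeries ℚ[X]) : th (F * G) = th F * G + F * th G := by
  ext1 n
  rw [coeff_th, map_add, PowerSeries.coeff_mul, PowerSeries.coeff_mul, PowerSeries.coeff_mul,
    Finset.mul_sum, ← Finset.sum_add_distrib]
  apply Finset.sum_congr rfl
  rintro ⟨i, j⟩ hij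
  rw [Finset.HasAntidiagonal.mem_antidiagonal] at hij
  simp only at hij ⊢
  rw [coeff_th, coeff_th, ← hij]
  push_cast; rw [C_add]; ring

lemma dl_C (p : ℚ[X]) : dl (PowerSeries.C p) = PowerSeries.C (LL 0 p) := by
  ext1 n
  rw [coeff_dl, PowerSeries.coeff_C, PowerSeries.coeff_C]
  split_ifs with h
  · simp [h]
  · exact LL_zero _

lemma th_C (p : ℚ[X]) : th (PowerSeries.C p) = 0 := by
  ext1 n
  rw [coeff_th, PowerSeries.coeff_C]
  split_ifs with h <;> simp [h]

lemma dl_tau : dl PowerSeries.X = -3 * PowerSeries.C X * PowerSeries.X := by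
  have h3 : (-3 : PowerSeries ℚ[X]) = PowerSeries.C (-3) := by rw [map_neg, map_ofNat]
  ext1 n
  rw [coeff_dl, h3, ← map_mul, PowerSeries.coeff_C_mul, PowerSeries.coeff_X]
  split_ifs with h
  · subst h; simp [LL, ← map_ofNat (C (R := ℚ)) 3]
  · simp [LL_zero]

lemma th_tau : th PowerSeries.X = PowerSeries.X := by
  ext1 n
  rw [coeff_th, PowerSeries.coeff_X]
  split_ifs with h
  · subst h; simp
  · simp

lemma dl_th (F : PowerSeries ℚ[X]) : th (dl F) = dl (th F) := by
  ext1 n; rw [coeff_th, coeff_dl, coeff_dl, coeff_th, LL_C_mul]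

lemma dl_one : dl 1 = 0 := by
  rw [← map_one PowerSeries.C, dl_C]; simp [LL]

lemma th_one : th 1 = 0 := by
  rw [← map_one PowerSeries.C, th_C]

lemma dl_x : dl (PowerSeries.C X) = PowerSeries.C X ^ 2 - 1 := by
  rw [dl_C]; simp [LL]

noncomputable def hf : PowerSeries ℚ[X] := PowerSeries.C (C (1 / 2))

lemma two_hf : 2 * hf = 1 := by
  rw [hf, ← map_ofNat (PowerSeries.C (R := ℚ[X])) 2, ← map_ofNat (C (R := ℚ)) 2, ← map_mul, ← map_mul]
  norm_num

lemma dl_hf : dl hf = 0 := by rw [hf, dl_C]; simp [LL]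

lemma th_hf : th hf = 0 := by rw [hf, th_C]

noncomputable def ep : PowerSeries ℚ[X] →+* PowerSeries ℚ[X] := PowerSeries.rescale (-1)

lemma coeff_ep (F : PowerSeries ℚ[X]) (n : ℕ) :
    PowerSeries.coeff n (ep F) = (-1) ^ n * PowerSeries.coeff n F := by
  rw [ep, PowerSeries.coeff_rescale]

lemma coeff_ep' (F : PowerSeries ℚ[X]) (n : ℕ) :
    PowerSeries.coeff n (ep F) = C ((-1) ^ n) * PowerSeries.coeff n F := by
  rw [coeff_ep]; simp

lemma ep_dl (F : PowerSeries ℚ[X]) : ep (dl F) = dl (ep F) := by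
  ext1 n; rw [coeff_ep', coeff_dl, coeff_dl, coeff_ep', LL_C_mul]

lemma ep_th (F : PowerSeries ℚ[X]) : ep (th F) = th (ep F) := by
  ext1 n; rw [coeff_ep', coeff_th, coeff_th, coeff_ep']; ring

lemma ep_C (p : ℚ[X]) : ep (PowerSeries.C p) = PowerSeries.C p := by
  ext1 n; rw [coeff_ep, PowerSeries.coeff_C]; split_ifs with h <;> simp [h]

lemma ep_tau : ep PowerSeries.X = -PowerSeries.X := PowerSeries.rescale_neg_one_X

lemma ep_hf : ep hf = hf := ep_C _

/-! gradings -/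

def GRd (d : ℕ) (F : PowerSeries ℚ[X]) : Prop := ∀ n, Gr (n + d) (PowerSeries.coeff n F)

lemma GRd.add {d : ℕ} {F G : PowerSeries ℚ[X]} (hF : GRd d F) (hG : GRd d G) : GRd d (F + G) := by
  intro n; rw [map_add]; exact (hF n).add (hG n)

lemma GRd.sub {d : ℕ} {F G : PowerSeries ℚ[X]} (hF : GRd d F) (hG : GRd d G) : GRd d (F - G) := by
  intro n; rw [map_sub]; exact (hF n).sub (hG n)

lemma GRd.mul {d d' : ℕ} {F G : PowerSeries ℚ[X]} (hF : GRd d F) (hG : GRd d' G) :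
    GRd (d + d') (F * G) := by
  intro n; rw [PowerSeries.coeff_mul]
  apply Gr.sum
  rintro ⟨i, j⟩ hij
  rw [Finset.HasAntidiagonal.mem_antidiagonal] at hij
  simp only at hij ⊢
  have := (hF i).mul (hG j)
  convert! this using 1
  omega

lemma GRd.C {d : ℕ} {p : ℚ[X]} (h : Gr d p) : GRd d (PowerSeries.C p) := by
  intro n; rw [PowerSeries.coeff_C]
  split_ifs with h'
  · subst h'; simpa using h
  · exact Gr.zero _

lemma GRd.mono2 {d : ℕ} {F : PowerSeries ℚ[X]} (hF : GRd d F) : GRd (d + 2) F :=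
  fun n => (hF n).mono (by omega) (by omega)

lemma GRd.dl {d : ℕ} {F : PowerSeries ℚ[X]} (hF : GRd d F) : GRd (d + 1) (dl F) := by
  intro n; rw [coeff_dl]; exact (hF n).LL _

lemma GRd.th {d : ℕ} {F : PowerSeries ℚ[X]} (hF : GRd d F) : GRd d (th F) := by
  intro n; rw [coeff_th]; exact (hF n).C_mul _

lemma GRd.ep {d : ℕ} {F : PowerSeries ℚ[X]} (hF : GRd d F) : GRd d (ep F) := by
  intro n; rw [coeff_ep']; exact (hF n).C_mul _

/-! ### The Riccati equation -/

noncomputable def pQ : PowerSeries ℚ[X] := PowerSeries.mk QHer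

noncomputable def psi : ℚ[X] := C (-(1 : ℚ) / 4) * (3 * X ^ 2 + 2)

lemma QHer_zero : QHer 0 = 0 := by rw [QHer]

lemma QHer_one : QHer 1 = C (-(1 : ℚ) / 8) * (3 * X ^ 2 + 2) := by rw [QHer]

lemma C_half_two : C (1 / 2 : ℚ) * 2 = 1 := by
  rw [← map_ofNat (C (R := ℚ)) 2, ← C_mul]; norm_num

lemma pQ_sq_coeff (k : ℕ) : PowerSeries.coeff (k + 1) (pQ * pQ) =
    ∑ j ∈ Finset.Ico 1 (k + 1), QHer j * QHer (k + 1 - j) := by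
  rw [PowerSeries.coeff_mul,
    Finset.Nat.sum_antidiagonal_eq_sum_range_succ_mk, Finset.sum_range_succ, Finset.range_eq_Ico,
    Finset.sum_eq_sum_Ico_succ_bot (by omega)]
  simp [pQ, QHer_zero]

lemma QHer_rec (k : ℕ) : QHer (k + 2) = -C (1 / 2 : ℚ) *
    (LL (3 * (k + 2)) (QHer (k + 1)) + PowerSeries.coeff (k + 1) (pQ * pQ)) := by
  rw [pQ_sq_coeff, QHer, Finset.sum_attach (Finset.Ico 1 (k + 1)) (fun j => QHer j * QHer (k + 1 - j)), LL]
  have : C (3 / 2 * ((k : ℚ) + 2)) = C (1 / 2) * C (3 * ((k : ℚ) + 2)) := by rw [← C_mul]; ring_nf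
  rw [this]; ring

lemma riccati_p : 2 * pQ = PowerSeries.X *
    (PowerSeries.C psi - dl pQ + 3 * PowerSeries.C X * pQ - pQ * pQ) := by
  have h3 : (3 : PowerSeries ℚ[X]) = PowerSeries.C 3 := by rw [map_ofNat]
  have h2 : (2 : PowerSeries ℚ[X]) = PowerSeries.C 2 := by rw [map_ofNat]
  ext1 n
  rw [h2, PowerSeries.coeff_C_mul]
  rcases n with _ | n
  · rw [PowerSeries.coeff_zero_X_mul]; simp [pQ, QHer_zero]
  · rw [PowerSeries.coeff_succ_X_mul, map_sub, map_add, map_sub, coeff_dl, h3, ← map_mul,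
      PowerSeries.coeff_C_mul]
    rcases n with _ | n
    · simp [pQ, QHer_zero, LL_zero, QHer_one, psi]
      rw [← map_ofNat (C (R := ℚ)) 2, ← map_ofNat (C (R := ℚ)) 3, ← mul_assoc, ← C_mul]
      norm_num
    · have := QHer_rec n
      have h : PowerSeries.coeff (n + 1 + 1) pQ = QHer (n + 2) := by simp [pQ]
      have h' : PowerSeries.coeff (n + 1) pQ = QHer (n + 1) := by simp [pQ]
      rw [h, h', this, PowerSeries.coeff_C, if_neg (by omega)]
      have e : LL (3 * ((n + 1 : ℕ) : ℚ)) (QHer (n + 1)) =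
          LL (3 * ((n : ℚ) + 2)) (QHer (n + 1)) + 3 * X * QHer (n + 1) := by
        simp only [LL]; push_cast
        simp only [C_mul, C_add, map_ofNat, C_1]; ring
      rw [e]
      linear_combination (-1 : ℚ[X]) * (LL (3 * ((n : ℚ) + 2)) (QHer (n + 1)) +
        PowerSeries.coeff (n + 1) (pQ * pQ)) * C_half_two

lemma Gr_QHer (n : ℕ) : Gr (n + 1) (QHer n) := by
  induction n using Nat.strong_induction_on with
  | _ n ih =>
    match n with
    | 0 => rw [QHer_zero]; exact Gr.zero _
    | 1 =>
      rw [QHer_one]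
      apply Gr.C_mul
      rw [← map_ofNat (C (R := ℚ)) 2, ← map_ofNat (C (R := ℚ)) 3]
      exact ((Gr.X_pow 2).C_mul _).add ((Gr.C _).mono (by norm_num) (by norm_num))
    | k + 2 =>
      rw [QHer_rec, ← C_neg, pQ_sq_coeff]
      apply Gr.C_mul
      apply Gr.add
      · exact (ih (k + 1) (by omega)).LL _
      · apply Gr.sum
        intro j hj
        rw [Finset.mem_Ico] at hj
        have := (ih j (by omega)).mul (ih (k + 1 - j) (by omega))
        convert! this using 1
        omega

noncomputable def sg : PowerSeries ℚ[X] := 1 + PowerSeries.X * pQ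

noncomputable def UU : PowerSeries ℚ[X] := 1 + PowerSeries.C psi * PowerSeries.X ^ 2

lemma riccati : PowerSeries.X * dl sg + sg ^ 2 = UU := by
  rw [sg, UU, dl_add, dl_one, dl_mul, dl_tau]
  linear_combination PowerSeries.X * riccati_p

lemma GRd_sg : GRd 0 sg := by
  intro n
  rw [sg, map_add]
  rcases n with _ | n
  · simpa using Gr.one
  · rw [PowerSeries.coeff_succ_X_mul, PowerSeries.coeff_one, if_neg (by omega), zero_add]
    simpa [pQ] using Gr_QHer n

noncomputable def om : PowerSeries ℚ[X] := hf * (sg + ep sg)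
noncomputable def ee : PowerSeries ℚ[X] := hf * (sg - ep sg)

lemma om_add_ee : om + ee = sg := by
  rw [om, ee]; linear_combination sg * two_hf

lemma riccati_ep : -PowerSeries.X * dl (ep sg) + (ep sg) ^ 2 = UU := by
  have := congrArg ep riccati
  rw [map_add, map_mul, ep_dl, map_pow, ep_tau] at this
  rw [this, UU, map_add, map_one, map_mul, map_pow, ep_C, ep_tau]
  ring

lemma D_om : PowerSeries.X * dl om = -2 * om * ee := by
  rw [om, ee, dl_mul, dl_hf, dl_add]
  linear_combination hf * riccati - hf * riccati_ep + (-hf) * (sg ^ 2 - ep sg ^ 2) * two_hf * (-1)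

lemma D_ee : PowerSeries.X * dl ee = UU - om ^ 2 - ee ^ 2 := by
  rw [om, ee, dl_mul, dl_hf, dl_sub]
  linear_combination hf * riccati + hf * riccati_ep + (UU + hf * (-1) * (sg ^ 2 + ep sg ^ 2) * (-1)) * two_hf

lemma coeff_om_zero : PowerSeries.constantCoeff om = 1 := by
  have h1 : PowerSeries.coeff 0 (ep sg) = 1 := by rw [coeff_ep]; simp [sg]
  have h2 : PowerSeries.constantCoeff (ep sg) = 1 := by simpa using h1
  have h3 : PowerSeries.constantCoeff sg = 1 := by simp [sg]
  rw [om, map_mul, map_add, h2, h3, hf, PowerSeries.constantCoeff_C]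
  linear_combination C_half_two

lemma coeff_om_even (k : ℕ) : PowerSeries.coeff (2 * k + 2) om = QHer (2 * k + 1) := by
  have h1 : PowerSeries.coeff (2 * k + 2) sg = QHer (2 * k + 1) := by
    rw [sg, map_add, PowerSeries.coeff_one, if_neg (by omega),
      show 2 * k + 2 = (2 * k + 1) + 1 from rfl, PowerSeries.coeff_succ_X_mul]
    simp [pQ]
  have h2 : PowerSeries.coeff (2 * k + 2) (ep sg) = QHer (2 * k + 1) := by
    rw [coeff_ep, h1, Even.neg_one_pow ⟨k + 1, by ring⟩, one_mul]
  rw [om, hf, PowerSeries.coeff_C_mul, map_add, h1, h2]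
  linear_combination QHer (2 * k + 1) * C_half_two

lemma GRd_om : GRd 0 om := by
  have := (GRd.C (Gr.C (1 / 2))).mul (GRd_sg.add GRd_sg.ep)
  simpa [om, hf] using this

noncomputable def RR : PowerSeries ℚ[X] := PowerSeries.invOfUnit om 1

lemma om_mul_RR : om * RR = 1 := PowerSeries.mul_invOfUnit om 1 (by simp [coeff_om_zero])

lemma GRd_RR : GRd 0 RR := by
  intro n
  induction n using Nat.strong_induction_on with
  | _ n ih =>
    have h := congrArg (PowerSeries.coeff n) om_mul_RR
    rw [PowerSeries.coeff_mul, Finset.Nat.sum_antidiagonal_eq_sum_range_succ_mk,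
      Finset.sum_range_succ'] at h
    simp only [PowerSeries.coeff_zero_eq_constantCoeff, coeff_om_zero, one_mul, Nat.sub_zero,
      PowerSeries.coeff_one] at h
    have h' : PowerSeries.coeff n RR = (if n = 0 then 1 else 0) -
        ∑ k ∈ Finset.range n, PowerSeries.coeff (k + 1) om * PowerSeries.coeff (n - (k + 1)) RR := by
      rw [← h]; ring
    rw [h']
    apply Gr.sub
    · split_ifs with h0
      · subst h0; exact Gr.one
      · exact Gr.zero _
    · apply Gr.sum
      intro k hk
      rw [Finset.mem_range] at hk
      have := (GRd_om (k + 1)).mul (ih (n - (k + 1)) (by omega))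
      convert! this using 1
      omega

lemma D_RR : PowerSeries.X * dl RR = 2 * ee * RR := by
  have h := congrArg dl om_mul_RR
  rw [dl_mul, dl_one] at h
  linear_combination PowerSeries.X * RR * h - RR ^ 2 * D_om
    + (2 * ee * RR - PowerSeries.X * dl RR) * om_mul_RR

lemma RR_third : PowerSeries.X * dl (PowerSeries.X * dl (PowerSeries.X * dl RR)) =
    4 * UU * (PowerSeries.X * dl RR) + 2 * RR * (PowerSeries.X * dl UU) := by
  have dl2 : dl (2 : PowerSeries ℚ[X]) = 0 := by
    have : (2 : PowerSeries ℚ[X]) = PowerSeries.C 2 := by rw [map_ofNat]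
    rw [this, dl_C]; simp [LL]
  have h2 : PowerSeries.X * dl (PowerSeries.X * dl RR) = 2 * RR * UU - 2 * om + 2 * ee ^ 2 * RR := by
    rw [D_RR, dl_mul, dl_mul, dl2]
    linear_combination 2 * RR * D_ee + 2 * ee * D_RR - 2 * om * om_mul_RR
  rw [h2]
  simp only [dl_add, dl_sub, dl_mul, dl2, pow_two]
  linear_combination (2 * UU + 2 * ee ^ 2 - 4 * UU) * D_RR - 2 * D_om + 4 * ee * RR * D_ee
    + (-4 * ee * om) * om_mul_RR

lemma coeff_D (F : PowerSeries ℚ[X]) (n : ℕ) :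
    PowerSeries.coeff (n + 1) (PowerSeries.X * dl F) = LL (3 * n) (PowerSeries.coeff n F) := by
  rw [PowerSeries.coeff_succ_X_mul, coeff_dl]

lemma RR_zero : PowerSeries.coeff 0 RR = 1 := by
  have := congrArg PowerSeries.constantCoeff om_mul_RR
  rw [map_mul, coeff_om_zero] at this
  simpa using this

lemma RR_rec (n : ℕ) :
    LL (3 * (n + 2)) (LL (3 * (n + 1)) (LL (3 * n) (PowerSeries.coeff n RR))) =
    4 * LL (3 * (n + 2)) (PowerSeries.coeff (n + 2) RR) +
    4 * psi * LL (3 * n) (PowerSeries.coeff n RR) + 2 * PowerSeries.coeff n RR * LL 6 psi := by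
  have hU : dl UU = PowerSeries.X ^ 2 * PowerSeries.C (LL 6 psi) := by
    rw [UU, dl_add, dl_one, dl_mul, pow_two, dl_mul, dl_tau, dl_C]
    have : LL 6 psi = LL 0 psi - 6 * X * psi := by simp [LL, ← map_ofNat (C (R := ℚ)) 6]
    rw [this]
    simp only [map_sub, map_mul, map_ofNat]; ring
  have h := congrArg (PowerSeries.coeff (n + 3)) RR_third
  have e : 4 * UU * (PowerSeries.X * dl RR) + 2 * RR * (PowerSeries.X * dl UU) =
     PowerSeries.C 4 * (PowerSeries.X * dl RR) +
      PowerSeries.X ^ 2 * (PowerSeries.C (4 * psi) * (PowerSeries.X * dl RR)) +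
     PowerSeries.X ^ 3 * (PowerSeries.C (2 * LL 6 psi) * RR) := by
    rw [hU, UU]; simp only [map_mul, map_ofNat]; ring
  rw [e, coeff_D, coeff_D, coeff_D, map_add, map_add, PowerSeries.coeff_C_mul, coeff_D,
    show n + 3 = (n + 1) + 2 from rfl, PowerSeries.coeff_X_pow_mul, PowerSeries.coeff_C_mul, coeff_D,
    show n + 1 + 2 = n + 3 from rfl, PowerSeries.coeff_X_pow_mul, PowerSeries.coeff_C_mul] at h
  push_cast at h
  rw [h]; ring

/-! ### variation -/

noncomputable def sp : PowerSeries ℚ[X] := sg - hf * PowerSeries.C X * PowerSeries.X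

noncomputable def TT : PowerSeries ℚ[X] :=
  -hf * sp - hf * PowerSeries.C X * dl sp - (PowerSeries.C X ^ 2 - 1) * th sp

lemma riccati_sp : PowerSeries.X * dl sp + PowerSeries.C X * PowerSeries.X * sp + sp ^ 2 = 1 := by
  have hpsi : PowerSeries.C psi = -hf ^ 2 * (3 * PowerSeries.C X ^ 2 + 2) := by
    rw [psi, hf]
    have : C (-(1 : ℚ) / 4) = -C (1 / 2) ^ 2 := by rw [← C_pow, ← C_neg]; norm_num
    rw [this]; simp only [map_mul, map_neg, map_add, map_pow, map_ofNat]
  have h := riccati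
  rw [UU, hpsi] at h
  rw [sp, dl_sub, dl_mul, dl_mul, dl_hf, dl_x, dl_tau]
  linear_combination h - (hf * PowerSeries.C X ^ 2 * PowerSeries.X ^ 2 + hf * PowerSeries.X ^ 2
    + PowerSeries.C X * PowerSeries.X * sg) * two_hf

lemma TT_eq : PowerSeries.X * (dl TT - 2 * PowerSeries.C X * TT) + 2 * sg * TT = -1 := by
  have hr := riccati_sp
  have hd := congrArg dl hr
  have ht := congrArg th hr
  have h2 := two_hf
  have thx : th (PowerSeries.C X) = 0 := th_C _
  simp only [pow_two, dl_add, dl_mul, th_add, th_mul, dl_one, th_one, dl_x, dl_tau, th_tau, thx, dl_th] at hd ht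
  have hsg : sg = sp + hf * PowerSeries.C X * PowerSeries.X := by rw [sp]; ring
  have hTd : dl TT = -hf * dl sp - hf * ((PowerSeries.C X ^ 2 - 1) * dl sp + PowerSeries.C X * dl (dl sp))
     - (2 * PowerSeries.C X * (PowerSeries.C X ^ 2 - 1) * th sp
       + (PowerSeries.C X ^ 2 - 1) * dl (th sp)) := by
    have : -hf * sp = 0 - hf * sp := by ring
    have d0 : dl 0 = 0 := by simpa using dl_sub 1 1
    rw [TT, this]
    simp only [dl_sub, dl_mul, pow_two, dl_x, dl_hf, dl_one, d0]
    ring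
  have hT2 : 2 * TT = -sp - PowerSeries.C X * dl sp - 2 * (PowerSeries.C X ^ 2 - 1) * th sp := by
    rw [TT]; linear_combination (-sp - PowerSeries.C X * dl sp) * h2
  have hd2 : 2 * dl TT = -dl sp - ((PowerSeries.C X ^ 2 - 1) * dl sp + PowerSeries.C X * dl (dl sp))
     - 2 * (2 * PowerSeries.C X * (PowerSeries.C X ^ 2 - 1) * th sp
       + (PowerSeries.C X ^ 2 - 1) * dl (th sp)) := by
    rw [hTd]; linear_combination (-dl sp - ((PowerSeries.C X ^ 2 - 1) * dl sp + PowerSeries.C X * dl (dl sp))) * h2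
  have hs2 : 2 * sg = 2 * sp + PowerSeries.C X * PowerSeries.X := by
    rw [hsg]; linear_combination PowerSeries.C X * PowerSeries.X * h2
  have main : 2 * (PowerSeries.X * (dl TT - 2 * PowerSeries.C X * TT) + 2 * sg * TT) = -2 := by
    linear_combination PowerSeries.X * hd2 - 2 * PowerSeries.C X * PowerSeries.X * hT2 + 2 * TT * hs2
      + (2 * sp + PowerSeries.C X * PowerSeries.X) * hT2 - PowerSeries.C X * hd
      - 2 * (PowerSeries.C X ^ 2 - 1) * ht - 2 * hr
  linear_combination hf * main - (PowerSeries.X * (dl TT - 2 * PowerSeries.C X * TT) + 2 * sg * TT + 1) * h2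

lemma GRd_TT : GRd 2 TT := by
  have hsp : GRd 0 sp := by
    apply GRd_sg.sub
    intro n
    rw [hf, mul_assoc, PowerSeries.coeff_C_mul, PowerSeries.coeff_C_mul, PowerSeries.coeff_X]
    split_ifs with h
    · subst h; simpa using Gr.X.C_mul (1 / 2)
    · simpa using Gr.zero _
  have h0 : GRd 0 (-hf) := by
    have := GRd.C (Gr.C (-(1 / 2)))
    rw [C_neg, map_neg] at this
    exact this
  have h1 : GRd 0 hf := GRd.C (Gr.C _)
  have hx : GRd 1 (PowerSeries.C (X : ℚ[X])) := GRd.C Gr.X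
  have hV : GRd 2 (PowerSeries.C (X : ℚ[X]) ^ 2 - 1) := by
    have := GRd.C Gr.V
    simpa using this
  exact ((h0.mul hsp).mono2.sub ((h1.mul hx).mul hsp.dl)).sub (hV.mul hsp.th)

noncomputable def TO : PowerSeries ℚ[X] := hf * (TT - ep TT)

lemma GRd_TO : GRd 2 TO := by
  have := (GRd.C (Gr.C (1 / 2))).mul (GRd_TT.sub GRd_TT.ep)
  simpa [TO, hf] using this

lemma TE_eq1 : TT + ep TT = -om - PowerSeries.C X * dl om - 2 * (PowerSeries.C X ^ 2 - 1) * th om := by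
  have h2 := two_hf
  have e : ep sp = ep sg + hf * PowerSeries.C X * PowerSeries.X := by
    rw [sp, map_sub, map_mul, map_mul, ep_hf, ep_C, ep_tau]; ring
  have h1 : sp + ep sp = 2 * om := by
    rw [e, sp, om]; linear_combination (-sg - ep sg) * h2
  have d2 : dl (2 * om) = 2 * dl om := by rw [two_mul, two_mul, dl_add]
  have t2 : th (2 * om) = 2 * th om := by rw [two_mul, two_mul, th_add]
  have hd := congrArg dl h1
  have ht := congrArg th h1
  rw [d2, dl_add] at hd
  rw [t2, th_add] at ht
  have hT : ep TT = -hf * ep sp - hf * PowerSeries.C X * dl (ep sp)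
      - (PowerSeries.C X ^ 2 - 1) * th (ep sp) := by
    rw [TT]
    simp only [map_sub, map_mul, map_neg, map_pow, map_one, ep_hf, ep_C, ep_dl, ep_th]
  rw [hT, TT]
  linear_combination (-hf) * h1 - hf * PowerSeries.C X * hd - (PowerSeries.C X ^ 2 - 1) * ht
    - (om + PowerSeries.C X * dl om) * h2

lemma TE_eq2 : TT + ep TT = -RR - PowerSeries.X * (dl (RR * TO) - 2 * PowerSeries.C X * (RR * TO)) := by
  have h2 := two_hf
  have h1 := TT_eq
  have h3 := congrArg ep TT_eq
  simp only [map_add, map_sub, map_mul, map_neg, map_one, map_ofNat, ep_C, ep_dl, ep_tau] at h3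
  have hs1 := om_add_ee
  have hs2 : om - ee = ep sg := by rw [om, ee]; linear_combination (ep sg) * two_hf
  rw [← hs1] at h1
  rw [← hs2] at h3
  have hdT : dl TO = hf * (dl TT - dl (ep TT)) := by
    rw [TO, dl_mul, dl_hf, dl_sub]; ring
  have hr := D_RR
  have ho := om_mul_RR
  rw [dl_mul]
  have key : PowerSeries.X * (dl TO - 2 * PowerSeries.C X * TO) + om * (TT + ep TT) + 2 * ee * TO = -1 := by
    rw [hdT, TO]
    linear_combination hf * h1 + hf * h3 - (1 + om * (TT + ep TT)) * h2
  linear_combination RR * key + TO * hr - (TT + ep TT) * ho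

/-! ### The key identity -/

lemma key_id (k : ℕ) : ∃ M : ℚ[X], Gr (2 * k + 3) M ∧
    C (2 * (2 * (k : ℚ) + 1)) * ((X ^ 2 - 1) * QHer (2 * k + 1)) =
      PowerSeries.coeff (2 * k + 2) RR + LL (6 * k + 5) M := by
  have h := TE_eq1.symm.trans TE_eq2
  have hc := congrArg (PowerSeries.coeff (2 * k + 2)) h
  have e1 : -om - PowerSeries.C X * dl om - 2 * (PowerSeries.C X ^ 2 - 1) * th om =
      -om - PowerSeries.C X * dl om - PowerSeries.C (2 * (X ^ 2 - 1)) * th om := by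
    simp only [map_mul, map_sub, map_pow, map_one, map_ofNat]
  have e2 : -RR - PowerSeries.X * (dl (RR * TO) - 2 * PowerSeries.C X * (RR * TO)) =
      -RR - PowerSeries.X * (dl (RR * TO) - PowerSeries.C (2 * X) * (RR * TO)) := by
    simp only [map_mul, map_ofNat]
  have hM := (GRd_RR.mul GRd_TO) (2 * k + 1)
  rw [e1, e2, map_sub, map_sub, map_neg, PowerSeries.coeff_C_mul, PowerSeries.coeff_C_mul, coeff_dl,
    coeff_th, map_sub, map_neg, show 2 * k + 2 = (2 * k + 1) + 1 from rfl,
    PowerSeries.coeff_succ_X_mul, map_sub, coeff_dl, PowerSeries.coeff_C_mul,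
    show (2 * k + 1) + 1 = 2 * k + 2 from rfl, coeff_om_even] at hc
  generalize PowerSeries.coeff (2 * k + 1) (RR * TO) = M at hc hM
  refine ⟨M - X * QHer (2 * k + 1), ?_, ?_⟩
  · apply Gr.sub
    · exact hM.mono (by omega) (by omega)
    · exact (Gr.X.mul (Gr_QHer (2 * k + 1))).mono (by omega) (by omega)
  · simp only [LL, derivative_sub, derivative_mul, derivative_X, C_add, C_mul, C_1, map_ofNat, Nat.cast_add,
      Nat.cast_mul, Nat.cast_ofNat, Nat.cast_one] at hc ⊢
    linear_combination -hc

/-! ### Explicit coefficients of `1/ω` -/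

noncomputable def EE (k : ℕ) (f : ℕ → ℚ) : ℚ[X] :=
  ∑ j ∈ Finset.range (k + 1), C (f j) * (X ^ (2 * j) * (X ^ 2 - 1) ^ (k - j))

lemma EE_congr {k : ℕ} {f g : ℕ → ℚ} (h : ∀ j, j ≤ k → f j = g j) : EE k f = EE k g := by
  apply Finset.sum_congr rfl
  intro j hj
  rw [h j (by rw [Finset.mem_range] at hj; omega)]

lemma EE_lin (k : ℕ) (a b : ℚ) (f g : ℕ → ℚ) :
    EE k (fun i => a * f i + b * g i) = C a * EE k f + C b * EE k g := by
  simp only [EE, Finset.mul_sum, ← Finset.sum_add_distrib]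
  apply Finset.sum_congr rfl
  intro j _
  rw [C_add, C_mul, C_mul]; ring

def sh (f : ℕ → ℚ) : ℕ → ℚ
  | 0 => 0
  | i + 1 => f i

lemma EE_sh (k : ℕ) (f : ℕ → ℚ) : EE (k + 1) (sh f) = X ^ 2 * EE k f := by
  rw [EE, Finset.sum_range_succ', EE, Finset.mul_sum]
  simp only [sh, C_0, zero_mul, add_zero]
  apply Finset.sum_congr rfl
  intro j _
  rw [show k + 1 - (j + 1) = k - j by omega]
  ring

lemma EE_V (k : ℕ) (f : ℕ → ℚ) (h : f (k + 1) = 0) : EE (k + 1) f = (X ^ 2 - 1) * EE k f := by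
  rw [EE, Finset.sum_range_succ, EE, Finset.mul_sum, h]
  simp only [C_0, zero_mul, add_zero]
  apply Finset.sum_congr rfl
  intro j hj
  rw [Finset.mem_range] at hj
  rw [show k + 1 - j = (k - j) + 1 by omega]
  ring

/-- derivation rule on even combinations -/
lemma LL_EE (c : ℚ) (k : ℕ) (f : ℕ → ℚ) (h : f (k + 1) = 0) :
    LL c (EE k f) = X * EE k (fun i => 2 * ((i : ℚ) + 1) * f (i + 1) + (2 * ((k : ℚ) - i) - c) * f i) := by
  have key : ∀ j ≤ k, LL c (C (f j) * (X ^ (2 * j) * (X ^ 2 - 1) ^ (k - j))) =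
      C (2 * (j : ℚ) * f j) * (X * X ^ (2 * (j - 1)) * (X ^ 2 - 1) ^ (k + 1 - j)) +
      C ((2 * ((k : ℚ) - j) - c) * f j) * (X * X ^ (2 * j) * (X ^ 2 - 1) ^ (k - j)) := by
    intro j hj
    obtain ⟨l, rfl⟩ := Nat.exists_eq_add_of_le hj
    rw [show j + l - j = l by omega, show j + l + 1 - j = l + 1 by omega]
    rw [LL_C_mul]
    have hV : (X ^ 2 - 1 : ℚ[X]) * derivative ((X ^ 2 - 1 : ℚ[X]) ^ l) =
        C (2 * (l : ℚ)) * X * (X ^ 2 - 1) ^ l := by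
      rcases l with _ | l
      · simp
      · rw [derivative_pow]
        simp [C_mul]
        rw [show (C (2 : ℚ)) = 2 from map_ofNat C 2]
        ring
    have hX : derivative (X ^ (2 * j) : ℚ[X]) = C (2 * (j : ℚ)) * (X * X ^ (2 * (j - 1))) := by
      rcases j with _ | j
      · simp
      · rw [derivative_X_pow, show 2 * (j + 1) - 1 = 2 * j + 1 by omega, Nat.add_sub_cancel]
        push_cast
        ring
    rw [LL, derivative_mul, hX]
    simp only [C_mul, C_sub, C_add, Nat.cast_add] at hV ⊢
    linear_combination C (f j) * X ^ (2 * j) * hV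
  rw [EE, LL_sum, Finset.sum_congr rfl (fun j hj => key j (by rw [Finset.mem_range] at hj; omega)),
    Finset.sum_add_distrib, Finset.sum_range_succ', EE, Finset.mul_sum]
  have e0 : ∀ i : ℕ, X * (C (2 * ((i : ℚ) + 1) * f (i + 1) + (2 * ((k : ℚ) - i) - c) * f i) *
      (X ^ (2 * i) * (X ^ 2 - 1) ^ (k - i))) =
      C (2 * ((i : ℚ) + 1) * f (i + 1)) * (X * X ^ (2 * i) * (X ^ 2 - 1) ^ (k - i)) +
      C ((2 * ((k : ℚ) - i) - c) * f i) * (X * X ^ (2 * i) * (X ^ 2 - 1) ^ (k - i)) := by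
    intro i; rw [C_add]; ring
  rw [Finset.sum_congr rfl (fun i _ => e0 i), Finset.sum_add_distrib]
  congr 1
  rw [Finset.sum_range_succ _ k, h]
  simp only [Nat.cast_zero, mul_zero, zero_mul, C_0]
  congr 1
  apply Finset.sum_congr rfl
  intro j hj
  rw [show k + 1 - (j + 1) = k - j by omega, Nat.add_sub_cancel]
  push_cast; ring

/-- derivation rule on odd combinations -/
lemma LL_X_EE (c : ℚ) (k : ℕ) (f : ℕ → ℚ) (h : f (k + 1) = 0) :
    LL c (X * EE k f) =
      EE (k + 1) (fun i => (2 * (i : ℚ) + 1) * f i + (2 * ((k : ℚ) + 1 - i) - c) * sh f i) := by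
  have h1 : LL c (X * EE k f) = (X ^ 2 - 1) * EE k f + X * LL c (EE k f) := by
    simp only [LL, derivative_mul, derivative_X]; ring
  rw [h1, LL_EE c k f h, ← EE_V k f h, ← mul_assoc, ← pow_two, ← EE_sh]
  have := EE_lin (k + 1) 1 1 f (sh (fun i => 2 * ((i : ℚ) + 1) * f (i + 1) + (2 * ((k : ℚ) - i) - c) * f i))
  simp only [one_mul, C_1] at this
  rw [← this]
  apply EE_congr
  intro j _
  rcases j with _ | j
  · simp [sh]
  · simp only [sh]; push_cast; ring

lemma hp_succ (n : ℕ) : hp (n + 1) = hp n * (n + 1 / 2) := rfl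

noncomputable def ga (a : ℕ → ℕ → ℚ) (k j : ℕ) : ℚ := hp (2 * k + j) / (j.factorial : ℚ) * a k j

lemma ga_step (a : ℕ → ℕ → ℚ)
    (hrec : ∀ N i : ℕ, (2 * (N : ℚ) + 2 + i) * a (N + 1) i - (2 * (N : ℚ) + 2 + i + 1 / 2) * a (N + 1) (i + 1) =
      -(3 / 2) * (a N i - 2 * a N (i + 1) + a N (i + 2)) +
        i * (a N (i - 1) - 3 * a N i + 3 * a N (i + 1) - a N (i + 2)))
    (k : ℕ) (f f1 f2 : ℕ → ℚ) (hf0 : f = ga a k)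
    (h1 : f1 = fun i : ℕ => 2 * ((i : ℚ) + 1) * f (i + 1) + (2 * ((k : ℚ) - i) - 6 * k) * f i)
    (h2 : f2 = fun i : ℕ => (2 * (i : ℚ) + 1) * f1 i + (2 * ((k : ℚ) + 1 - i) - (6 * k + 3)) * sh f1 i) (i : ℕ) :
    (2 * ((i : ℚ) + 1) * f2 (i + 1) + (2 * ((k : ℚ) + 1 - i) - (6 * k + 6)) * f2 i)
      + (5 * sh f1 i - 2 * f1 i) + 9 * f i - 15 * sh f i =
    4 * (2 * ((i : ℚ) + 1) * ga a (k + 1) (i + 1) + (2 * ((k : ℚ) + 1 - i) - (6 * k + 6)) * ga a (k + 1) i) := by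
  have hr := hrec k i
  rcases i with _ | i
  · simp only [h2, h1, hf0, sh, ga]
    simp only [show 2 * k + (0 + 1 + 1) = 2 * k + 2 by ring, show 2 * k + (0 + 1) = 2 * k + 1 by ring,
      show 2 * (k + 1) + (0 + 1) = 2 * k + 3 by ring, show 2 * (k + 1) + 0 = 2 * k + 2 by ring,
      hp_succ, Nat.factorial, add_zero]
    simp only [zero_add] at hr ⊢
    push_cast at hr ⊢
    field_simp
    linear_combination 8 * hp (2 * k) * (4 * k + 1) * (4 * k + 3) * hr
  · simp only [h2, h1, hf0, sh, ga]
    simp only [show 2 * k + (i + 1 + 1 + 1) = 2 * k + i + 3 by ring,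
      show 2 * k + (i + 1 + 1) = 2 * k + i + 2 by ring, show 2 * k + (i + 1) = 2 * k + i + 1 by ring,
      show 2 * (k + 1) + (i + 1 + 1) = 2 * k + i + 4 by ring,
      show 2 * (k + 1) + (i + 1) = 2 * k + i + 3 by ring,
      hp_succ, Nat.factorial]
    simp only [Nat.add_sub_cancel] at hr ⊢
    push_cast at hr ⊢
    have hF : (i.factorial : ℚ) ≠ 0 := by positivity
    have hi : (i : ℚ) + 1 ≠ 0 := by positivity
    have hi2 : (i : ℚ) + 2 ≠ 0 := by positivity
    have hi3 : (i : ℚ) + 3 ≠ 0 := by positivity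
    field_simp
    rw [show i + 1 + 2 = i + 1 + 1 + 1 from rfl] at hr
    linear_combination 8 * hp (2 * k + i) * (2 * (2 * (k : ℚ) + i) + 1) * (2 * (2 * (k : ℚ) + i + 1) + 1)
      * (2 * (2 * (k : ℚ) + i + 2) + 1) * ((i : ℚ) + 3) * hr

lemma Gr_EE (k : ℕ) (f : ℕ → ℚ) : Gr (2 * k) (EE k f) := by
  apply Gr.sum
  intro j hj
  rw [Finset.mem_range] at hj
  apply Gr.C_mul
  have hV : ∀ l : ℕ, Gr (2 * l) ((X ^ 2 - 1 : ℚ[X]) ^ l) := by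
    intro l
    induction l with
    | zero => simpa using Gr.one
    | succ l ih => rw [pow_succ]; exact (ih.mul Gr.V)
  have := (Gr.X_pow (2 * j)).mul (hV (k - j))
  convert! this using 1
  omega

lemma RR_even (a : ℕ → ℕ → ℚ) (h00 : a 0 0 = 1) (hz : ∀ N j, N < j → a N j = 0)
    (hrec : ∀ N i : ℕ, (2 * (N : ℚ) + 2 + i) * a (N + 1) i - (2 * (N : ℚ) + 2 + i + 1 / 2) * a (N + 1) (i + 1) =
      -(3 / 2) * (a N i - 2 * a N (i + 1) + a N (i + 2)) +
        i * (a N (i - 1) - 3 * a N i + 3 * a N (i + 1) - a N (i + 2))) (k : ℕ) :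
    PowerSeries.coeff (2 * k) RR = EE k (ga a k) := by
  have gz : ∀ N j, N < j → ga a N j = 0 := fun N j h => by rw [ga, hz N j h, mul_zero]
  induction k with
  | zero => rw [mul_zero, RR_zero]; simp [EE, ga, h00, hp]
  | succ k ih =>
    have hR := RR_rec (2 * k)
    have hG := GRd_RR (2 * k + 2)
    rw [show 2 * (k + 1) = 2 * k + 2 by ring]
    generalize PowerSeries.coeff (2 * k + 2) RR = r' at hR hG ⊢
    rw [ih] at hR
    have c1 : (3 * ((2 * k : ℕ) : ℚ)) = 6 * k := by push_cast; ring
    have c2 : (3 * (((2 * k : ℕ) : ℚ) + 1)) = 6 * k + 3 := by push_cast; ring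
    have c3 : (3 * (((2 * k : ℕ) : ℚ) + 2)) = 6 * k + 6 := by push_cast; ring
    rw [c1, c2, c3] at hR
    obtain ⟨f, hf0⟩ : ∃ f, f = ga a k := ⟨_, rfl⟩
    obtain ⟨f1, h1⟩ : ∃ f1 : ℕ → ℚ, f1 = fun i : ℕ =>
      2 * ((i : ℚ) + 1) * f (i + 1) + (2 * ((k : ℚ) - i) - 6 * k) * f i := ⟨_, rfl⟩
    obtain ⟨f2, h2⟩ : ∃ f2 : ℕ → ℚ, f2 = fun i : ℕ =>
      (2 * (i : ℚ) + 1) * f1 i + (2 * ((k : ℚ) + 1 - i) - (6 * k + 3)) * sh f1 i := ⟨_, rfl⟩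
    have fz : ∀ j, k < j → f j = 0 := fun j h => by rw [hf0, gz k j h]
    have f1z : ∀ j, k < j → f1 j = 0 := fun j h => by
      rw [h1]; simp [fz j h, fz (j + 1) (by omega)]
    have f2z : f2 (k + 1 + 1) = 0 := by
      rw [h2]; simp [f1z (k + 1 + 1) (by omega), sh, f1z (k + 1) (by omega)]
    have st := ga_step a hrec k f f1 f2 hf0 h1 h2
    rw [← hf0, LL_EE _ _ f (fz _ (by omega)), ← h1, LL_X_EE _ _ f1 (f1z _ (by omega)), ← h2,
      LL_EE _ _ f2 f2z] at hR
    have hpsi : 4 * psi = -(5 * X ^ 2 - 2 * (X ^ 2 - 1)) := by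
      rw [psi, ← map_ofNat (C (R := ℚ)) 4, ← mul_assoc, ← C_mul]
      norm_num
      ring
    have hpsi2 : 2 * LL 6 psi = X * (-(9 * (X ^ 2 - 1) - 15 * X ^ 2)) := by
      have h4 : 2 * LL 6 (4 * psi) = 4 * (2 * LL 6 psi) := by
        rw [← map_ofNat (C (R := ℚ)) 4, LL_C_mul]; ring
      have h5 : (4 : ℚ[X]) * (2 * LL 6 psi) = 4 * (X * (-(9 * (X ^ 2 - 1) - 15 * X ^ 2))) := by
        rw [← h4, hpsi, LL]
        simp
        rw [show (C (6 : ℚ)) = 6 from map_ofNat C 6]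
        ring
      exact mul_left_cancel₀ (by norm_num) h5
    have hLL : 4 * LL (6 * k + 6) (EE (k + 1) (ga a (k + 1))) = 4 * LL (6 * k + 6) r' := by
      rw [LL_EE _ _ _ (gz _ _ (by omega))]
      have e : 4 * EE (k + 1) (fun i : ℕ => 2 * ((i : ℚ) + 1) * ga a (k + 1) (i + 1) +
          (2 * (((k + 1 : ℕ) : ℚ) - i) - (6 * k + 6)) * ga a (k + 1) i) =
          EE (k + 1) (fun i : ℕ => 2 * ((i : ℚ) + 1) * f2 (i + 1) +
            (2 * (((k + 1 : ℕ) : ℚ) - i) - (6 * k + 6)) * f2 i)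
          + (5 * EE (k + 1) (sh f1) - 2 * EE (k + 1) f1) + 9 * EE (k + 1) f - 15 * EE (k + 1) (sh f) := by
        simp only [EE, Finset.mul_sum, ← Finset.sum_add_distrib, ← Finset.sum_sub_distrib]
        apply Finset.sum_congr rfl
        intro j _
        have := congrArg (C (R := ℚ)) (st j)
        push_cast
        simp only [C_add, C_sub, C_mul, map_ofNat] at this ⊢
        linear_combination (-(X ^ (2 * j) * (X ^ 2 - 1) ^ (k + 1 - j))) * this
      rw [EE_sh, EE_sh, EE_V k f (fz _ (by omega)), EE_V k f1 (f1z _ (by omega))] at e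
      linear_combination X * e + hR + (X * EE k f1) * hpsi + EE k f * hpsi2
    have hLL2 := mul_left_cancel₀ (by norm_num : (4 : ℚ[X]) ≠ 0) hLL
    have hsub : LL ((6 * k + 6 : ℕ) : ℚ) (r' - EE (k + 1) (ga a (k + 1))) = 0 := by
      push_cast
      rw [LL_sub, hLL2, sub_self]
    have hGr : Gr (2 * k + 2) (r' - EE (k + 1) (ga a (k + 1))) := Gr.sub hG (Gr_EE _ _)
    exact sub_eq_zero.mp (LL_inj_lt _ _ hsub (lt_of_le_of_lt hGr.natDegree_le (by omega)))

/-! ### Leading coefficient -/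

lemma coeff_Vpow_mul (l n : ℕ) (P : ℚ[X]) (hP : Gr n P) :
    ((X ^ 2 - 1) ^ l * P).coeff (2 * l + n) = P.coeff n := by
  have hV : (X ^ 2 - 1 : ℚ[X]) = X ^ 2 - C 1 := by simp
  have hd : ((X ^ 2 - 1 : ℚ[X]) ^ l).natDegree = 2 * l := by
    rw [hV, natDegree_pow, natDegree_X_pow_sub_C]; ring
  have hm : ((X ^ 2 - 1 : ℚ[X]) ^ l).Monic := by
    rw [hV]; exact (monic_X_pow_sub_C 1 (by norm_num)).pow l
  have := coeff_mul_add_eq_of_natDegree_le (f := (X ^ 2 - 1 : ℚ[X]) ^ l) (g := P) hd.le hP.natDegree_le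
  rw [this]
  have h1 : ((X ^ 2 - 1 : ℚ[X]) ^ l).coeff (2 * l) = 1 := by
    rw [← hd]; exact hm.coeff_natDegree
  rw [h1, one_mul]

lemma Gr.coeff_eq_zero {n m : ℕ} {P : ℚ[X]} (hP : Gr n P) (h : n < m) : P.coeff m = 0 := by
  by_contra h'
  have := (hP m h').1
  omega

lemma lead_coeff (k : ℕ) (P : ℚ[X]) (hP : Gr (6 * k + 3) P) (hL : LL (6 * k + 3) P = QHer (2 * k + 1)) :
    P.coeff (6 * k + 3) = (1 - 2 ^ (2 * k + 1)) * _root_.bernoulli (2 * k + 2)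
      / ((2 * k + 2) * (2 * (2 * k + 1))) := by
  obtain ⟨a, h00, hz, hrec, hsum⟩ := exists_a
  obtain ⟨M, hM, hk⟩ := key_id k
  have hr := RR_even a h00 hz hrec (k + 1)
  rw [show 2 * (k + 1) = 2 * k + 2 by ring] at hr
  have hpj : ∀ j, ∃ P : ℚ[X], Gr (2 * (2 * k + 1 + j) + 1) P ∧
    LL ((2 * (2 * k + 1 + j) + 1 : ℕ) : ℚ) P = X ^ (2 * j) ∧
    P.coeff (2 * (2 * k + 1 + j) + 1) = (2 * k + 1).factorial * hp j / (2 * hp (2 * k + 2 + j)) := by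
    intro j
    obtain ⟨P, h1, h2, h3⟩ := exists_odd_mono' (2 * k + 1 + j) (2 * k + 1) j (by ring)
    refine ⟨P, h1, h2, ?_⟩
    rw [h3, Even.neg_one_pow ⟨k + 1, by ring⟩, one_mul, show 2 * k + 1 + j + 1 = 2 * k + 2 + j by ring]
  choose p hp1 hp2 hp3 using hpj
  set S : ℚ[X] := ∑ j ∈ Finset.range (k + 1 + 1), C (ga a (k + 1) j) * ((X ^ 2 - 1) ^ (k + 1 - j) * p j)
    with hS
  have hLS : LL (6 * k + 5) S = PowerSeries.coeff (2 * k + 2) RR := by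
    rw [hr, EE, hS, LL_sum]
    apply Finset.sum_congr rfl
    intro j hj
    rw [Finset.mem_range] at hj
    obtain ⟨l, hl⟩ : ∃ l, k + 1 = j + l := ⟨k + 1 - j, by omega⟩
    rw [LL_C_mul, show k + 1 - j = l by omega]
    have e : (6 * (k : ℚ) + 5) = ((2 * (2 * k + 1 + j) + 1 : ℕ) : ℚ) + 2 * (l : ℚ) := by
      have : (k : ℚ) + 1 = j + l := by exact_mod_cast hl
      push_cast; linear_combination 2 * this
    rw [e, LL_Vpow_mul, hp2]; ring
  have hz0 : LL ((2 * (3 * k + 2) + 1 : ℕ) : ℚ)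
      (C (2 * (2 * (k : ℚ) + 1)) * ((X ^ 2 - 1) * P) - S - M) = 0 := by
    have e : ((2 * (3 * k + 2) + 1 : ℕ) : ℚ) = 6 * k + 5 := by push_cast; ring
    have hV := LL_V_mul (6 * k + 3) P
    rw [show (6 * (k : ℚ) + 3 + 2) = 6 * k + 5 by ring] at hV
    rw [e, LL_sub, LL_sub, LL_C_mul, hLS, hV, hL, hk]; ring
  have h0 := LL_inj_odd _ _ hz0
  have hc := congrArg (fun Q : ℚ[X] => Q.coeff (6 * k + 5)) h0
  simp only [coeff_sub, coeff_C_mul, coeff_zero] at hc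
  have h1 : ((X ^ 2 - 1) * P).coeff (6 * k + 5) = P.coeff (6 * k + 3) := by
    have := coeff_Vpow_mul 1 _ P hP
    rw [pow_one, show 2 * 1 + (6 * k + 3) = 6 * k + 5 by ring] at this
    exact this
  have h2 : S.coeff (6 * k + 5) = (2 * k + 1).factorial / 2 *
      ∑ j ∈ Finset.range (k + 1 + 1), hp j / j.factorial * a (k + 1) j := by
    rw [hS, finsetSum_coeff, Finset.mul_sum]
    apply Finset.sum_congr rfl
    intro j hj
    rw [Finset.mem_range] at hj
    have := coeff_Vpow_mul (k + 1 - j) _ (p j) (hp1 j)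
    rw [show 2 * (k + 1 - j) + (2 * (2 * k + 1 + j) + 1) = 6 * k + 5 by omega] at this
    rw [coeff_C_mul, this, hp3, ga, show 2 * (k + 1) + j = 2 * k + 2 + j by ring]
    have := (hp_pos (2 * k + 2 + j)).ne'
    field_simp
  have hF : ((2 * k + 1).factorial : ℚ) ≠ 0 := by positivity
  have hfac : ((2 * k + 2).factorial : ℚ) = (2 * k + 2) * (2 * k + 1).factorial := by
    rw [Nat.factorial_succ (2 * k + 1)]; push_cast; ring
  rw [h1, h2, hsum, hM.coeff_eq_zero (by omega), show 2 * (k + 1) = 2 * k + 2 by ring, hfac] at hc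
  have hk1 : (2 * (k : ℚ) + 1) ≠ 0 := by positivity
  have hk2 : (2 * (k : ℚ) + 2) ≠ 0 := by positivity
  have e2 : (2 : ℚ) ^ (2 * k + 2) = 2 * 2 ^ (2 * k + 1) := by ring
  rw [e2] at hc
  have hc2 : 2 * (2 * (k : ℚ) + 1) * P.coeff (6 * k + 3) =
      (1 - 2 ^ (2 * k + 1)) * _root_.bernoulli (2 * k + 2) / (2 * k + 2) := by
    rw [sub_zero, sub_eq_zero] at hc
    rw [hc]
    generalize ((2 * k + 1).factorial : ℚ) = F at hF
    generalize (2 : ℚ) ^ (2 * k + 1) = T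
    field_simp
  rw [eq_div_iff (by positivity)]
  rw [eq_div_iff hk2] at hc2
  linear_combination hc2

lemma bernoulli_even_ne (k : ℕ) (hk : k ≠ 0) : _root_.bernoulli (2 * k) ≠ 0 := by
  intro h
  have hs := hasSum_zeta_nat hk
  rw [h] at hs
  simp only [Rat.cast_zero, mul_zero, zero_div] at hs
  have h1 := le_hasSum hs 1 (fun j _ => by positivity)
  norm_num at h1

lemma QHer_top (k : ℕ) : (QHer (k + 1)).coeff (k + 2) < 0 := by
  induction k using Nat.strong_induction_on with
  | _ k ih =>
    rcases k with _ | k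
    · rw [zero_add, QHer_one, coeff_C_mul]
      have : (3 * X ^ 2 + 2 : ℚ[X]).coeff (0 + 2) = 3 := by
        rw [← map_ofNat (C (R := ℚ)) 3, ← map_ofNat (C (R := ℚ)) 2, coeff_add, coeff_C_mul, coeff_X_pow, coeff_C]
        norm_num
      rw [this]; norm_num
    · rw [show k + 1 + 1 = k + 2 from rfl, QHer_rec, neg_mul, coeff_neg, coeff_C_mul, coeff_add, coeff_LL_succ, pQ_sq_coeff,
        (Gr_QHer (k + 1)).coeff_eq_zero (m := k + 2 + 2) (by omega), finsetSum_coeff]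
      have h1 := ih k (by omega)
      have h2 : 0 ≤ ∑ j ∈ Finset.Ico 1 (k + 1), (QHer j * QHer (k + 1 - j)).coeff (k + 2 + 1) := by
        apply Finset.sum_nonneg
        intro j hj
        rw [Finset.mem_Ico] at hj
        obtain ⟨i, rfl⟩ : ∃ i, j = i + 1 := ⟨j - 1, by omega⟩
        obtain ⟨l, rfl⟩ : ∃ l, k = i + l + 1 := ⟨k - i - 1, by omega⟩
        rw [show i + l + 1 + 1 - (i + 1) = l + 1 by omega,
          show i + l + 1 + 2 + 1 = (i + 2) + (l + 2) by ring]
        rw [coeff_mul_add_eq_of_natDegree_le (Gr_QHer (i + 1)).natDegree_le (Gr_QHer (l + 1)).natDegree_le]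
        exact (mul_pos_of_neg_of_neg (ih i (by omega)) (ih l (by omega))).le
      rw [show k + 2 + 1 = k + 1 + 2 from rfl] at h2
      push_cast
      have h3 : ((k : ℚ) + 2 - 3 * (k + 2)) * (QHer (k + 1)).coeff (k + 2) > 0 := by
        apply mul_pos_of_neg_of_neg _ h1
        have : (0 : ℚ) ≤ k := by positivity
        linarith
      nlinarith

/-- For every `k ≥ 1`:
(i) the equation `(X²−1)P′ − 3(2k−1)XP = Q_{2k−1}` has exactly one polynomial solution,
which is odd of degree exactly `6k−3` with leading coefficient
`2^{2k−1}·B_{2k}(1/2)/(4k(2k−1))` where `B_{2k}(1/2) = (2^{1−2k}−1)·B_{2k}`; and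
(ii) the equation `(X²−1)P′ − 6kXP = Q_{2k}` has exactly one polynomial solution of degree
`< 6k`, which is even of degree exactly `2k`. -/
theorem stmt11 (k : ℕ) (hk : 1 ≤ k) :
    (∃! P : Polynomial ℚ,
        (X ^ 2 - 1) * derivative P - C (6 * (k : ℚ) - 3) * X * P = QHer (2 * k - 1)) ∧
    (∀ P : Polynomial ℚ,
        (X ^ 2 - 1) * derivative P - C (6 * (k : ℚ) - 3) * X * P = QHer (2 * k - 1) →
        P.comp (-X) = -P ∧ P.degree = (6 * k - 3 : ℕ) ∧
        P.leadingCoeff =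
          (2 : ℚ) ^ (2 * k - 1) * (((2 : ℚ) ^ ((1 : ℤ) - 2 * (k : ℤ)) - 1) * _root_.bernoulli (2 * k))
            / (4 * (k : ℚ) * (2 * (k : ℚ) - 1))) ∧
    (∃! P : Polynomial ℚ,
        P.degree < (6 * k : ℕ) ∧
        (X ^ 2 - 1) * derivative P - C (6 * (k : ℚ)) * X * P = QHer (2 * k)) ∧
    (∀ P : Polynomial ℚ,
        P.degree < (6 * k : ℕ) →
        (X ^ 2 - 1) * derivative P - C (6 * (k : ℚ)) * X * P = QHer (2 * k) →
        P.comp (-X) = P ∧ P.degree = (2 * k : ℕ)) := by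
  obtain ⟨n, rfl⟩ : ∃ n, k = n + 1 := ⟨k - 1, by omega⟩
  have c1 : 6 * ((n + 1 : ℕ) : ℚ) - 3 = ((2 * (3 * n + 1) + 1 : ℕ) : ℚ) := by push_cast; ring
  have c1' : 6 * ((n + 1 : ℕ) : ℚ) - 3 = 6 * n + 3 := by push_cast; ring
  have c2 : 6 * ((n + 1 : ℕ) : ℚ) = ((6 * (n + 1) : ℕ) : ℚ) := by push_cast; ring
  rw [show 2 * (n + 1) - 1 = 2 * n + 1 by omega, show 6 * (n + 1) - 3 = 6 * n + 3 by omega]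
  -- odd case
  obtain ⟨P, hP, hL⟩ := exists_odd_gen (3 * n + 1) (QHer (2 * n + 1))
    ((Gr_QHer (2 * n + 1)).mono (by omega) (by omega))
  have uniq1 : ∀ R : ℚ[X], (X ^ 2 - 1) * derivative R - C (6 * ((n + 1 : ℕ) : ℚ) - 3) * X * R =
      QHer (2 * n + 1) → R = P := by
    intro R hR
    rw [c1] at hR
    have hR' : LL ((2 * (3 * n + 1) + 1 : ℕ) : ℚ) R = QHer (2 * n + 1) := hR
    have : LL ((2 * (3 * n + 1) + 1 : ℕ) : ℚ) (R - P) = 0 := by rw [LL_sub, hR', hL, sub_self]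
    exact sub_eq_zero.mp (LL_inj_odd _ _ this)
  -- even case
  obtain ⟨E, hE, hLE⟩ := exists_even_gen (6 * (n + 1)) (n + 1) (by omega) (QHer (2 * (n + 1)))
    (Gr_QHer (2 * (n + 1)))
  have uniq2 : ∀ R : ℚ[X], R.degree < (6 * (n + 1) : ℕ) →
      (X ^ 2 - 1) * derivative R - C (6 * ((n + 1 : ℕ) : ℚ)) * X * R =
      QHer (2 * (n + 1)) → R = E := by
    intro R hd hR
    rw [c2] at hR
    have hR' : LL ((6 * (n + 1) : ℕ) : ℚ) R = QHer (2 * (n + 1)) := hR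
    have h0 : LL ((6 * (n + 1) : ℕ) : ℚ) (R - E) = 0 := by rw [LL_sub, hR', hLE, sub_self]
    refine sub_eq_zero.mp (LL_inj_lt _ _ h0 ?_)
    have h1 : R.natDegree < 6 * (n + 1) := by
      by_cases hR0 : R = 0
      · rw [hR0, natDegree_zero]; omega
      · exact (natDegree_lt_iff_degree_lt hR0).mpr hd
    have h2 := hE.natDegree_le
    have h3 := natDegree_sub_le R E
    exact lt_of_le_of_lt h3 (max_lt h1 (by omega))
  have degE : E.degree = (2 * (n + 1) : ℕ) := by
    have h := congrArg (fun Q : ℚ[X] => Q.coeff (2 * (n + 1) + 1)) hLE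
    simp only [coeff_LL_succ] at h
    rw [hE.coeff_eq_zero (m := 2 * (n + 1) + 2) (by omega)] at h
    have ht := QHer_top (2 * n + 1)
    rw [show 2 * n + 1 + 1 = 2 * (n + 1) by ring, show 2 * n + 1 + 2 = 2 * (n + 1) + 1 by ring, ← h] at ht
    have hne : E.coeff (2 * (n + 1)) ≠ 0 := by
      intro h0; rw [h0] at ht; simp at ht
    exact degree_eq_of_le_of_coeff_ne_zero (natDegree_le_iff_degree_le.mp hE.natDegree_le) hne
  refine ⟨⟨P, ?_, uniq1⟩, ?_, ⟨E, ⟨?_, ?_⟩, fun R hR => uniq2 R hR.1 hR.2⟩, ?_⟩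
  · change _ - C (6 * ((n + 1 : ℕ) : ℚ) - 3) * X * P = _
    rw [c1]; exact hL
  · intro R hR
    rw [uniq1 R hR]
    have hP' : Gr (6 * n + 3) P := hP.mono (by omega) (by omega)
    have hL' : LL (6 * n + 3) P = QHer (2 * n + 1) := by rw [← hL, ← c1', c1]
    have hc := lead_coeff n P hP' hL'
    have hne : P.coeff (6 * n + 3) ≠ 0 := by
      rw [hc]
      have hb := bernoulli_even_ne (n + 1) (by omega)
      rw [show 2 * (n + 1) = 2 * n + 2 by ring] at hb
      have hpw : (1 - 2 ^ (2 * n + 1) : ℚ) ≠ 0 := by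
        have : (1 : ℚ) < 2 ^ (2 * n + 1) := one_lt_pow₀ (by norm_num) (by omega)
        linarith
      have hd : ((2 * (n : ℚ) + 2) * (2 * (2 * n + 1))) ≠ 0 := by positivity
      exact div_ne_zero (mul_ne_zero hpw hb) hd
    have hdeg : P.degree = (6 * n + 3 : ℕ) :=
      degree_eq_of_le_of_coeff_ne_zero (natDegree_le_iff_degree_le.mp hP'.natDegree_le) hne
    refine ⟨hP.comp_odd, hdeg, ?_⟩
    rw [leadingCoeff, natDegree_eq_of_degree_eq_some hdeg, hc, show 2 * (n + 1) = 2 * n + 2 by ring]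
    have e : (2 : ℚ) ^ ((1 : ℤ) - 2 * ((n + 1 : ℕ) : ℤ)) = ((2 : ℚ) ^ (2 * n + 1))⁻¹ := by
      rw [show (1 : ℤ) - 2 * ((n + 1 : ℕ) : ℤ) = -((2 * n + 1 : ℕ) : ℤ) by push_cast; ring, zpow_neg, zpow_natCast]
    rw [e]
    have hp0 : (2 : ℚ) ^ (2 * n + 1) ≠ 0 := by positivity
    have e3 : (2 : ℚ) ^ (2 * n + 1) * ((((2 : ℚ) ^ (2 * n + 1))⁻¹ - 1) * _root_.bernoulli (2 * n + 2)) =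
        (1 - 2 ^ (2 * n + 1)) * _root_.bernoulli (2 * n + 2) := by
      rw [← mul_assoc, mul_sub, mul_inv_cancel₀ hp0, mul_one]
    rw [e3]
    congr 1
    push_cast; ring
  · rw [degE]; exact_mod_cast (by omega : 2 * (n + 1) < 6 * (n + 1))
  · rw [c2]; exact hLE
  · intro R hd hR
    rw [uniq2 R hd hR]
    exact ⟨hE.comp_even, degE⟩
end
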